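/- arXiv:0801.4156 — 2 statements merged into one kernel-verified Lean document; each statement's English description precedes it below -/
import Mathlib

section
/- Fix m ∈ (0,1). For each N ∈ ℕ, let ν_N be the uniform probability measure on the set X_{N,⌊Nm⌋} of configurations η : ℤ/Nℤ → {0,1} with exactly ⌊Nm⌋ ones, and let π_N(η) := (1/N) Σ_{x ∈ ℤ/Nℤ} η(x) δ_{x/N}, a finite measure on the circle Λ = ℝ/ℤ. Then the laws of π_N under ν_N satisfy a large deviation principle with speed N and rate function S₁: for every set C of finite Borel measures on Λ closed in the weak topology, limsup_{N→∞} N⁻¹ log ν_N({η : π_N(η) ∈ C}) ≤ − inf_{ρ∈C} S₁(ρ), and for every weakly open set O, liminf_{N→∞} N⁻¹ log ν_N({η : π_N(η) ∈ O}) ≥ − inf_{ρ∈O} S₁(ρ). -/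
open MeasureTheory Set Filter Topology
open scoped ENNReal NNReal

noncomputable section

instance fact01 : Fact ((0:ℝ) < 1) := ⟨zero_lt_one⟩

/-- The circle `ℝ/ℤ`. -/
abbrev Circle' : Type := AddCircle (1:ℝ)

/-- The Dirac measure at a point, as a finite measure. -/
noncomputable def diracFM (y : Circle') : FiniteMeasure Circle' :=
  ⟨Measure.dirac y, inferInstance⟩

/-- The empirical measure of a TASEP configuration (encoded as the finset of occupied
sites): `π_N(η) = N⁻¹ ∑_{x} η(x) δ_{x/N}`. -/
noncomputable def empTASEP (N : ℕ) (S : Finset (ZMod N)) : FiniteMeasure Circle' :=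
  ((N : ℝ≥0))⁻¹ • ∑ x ∈ S, diracFM (((x.val : ℝ) / (N : ℝ) : ℝ) : Circle')

/-- `h_m(x) = x log(x/m) + (1-x) log((1-x)/(1-m))`, with the convention `0 log 0 = 0`. -/
noncomputable def hFun (m x : ℝ) : ℝ :=
  x * Real.log (x / m) + (1 - x) * Real.log ((1 - x) / (1 - m))

open Classical in
/-- The rate functional `S₁` for the TASEP: `∫ h_m(f)` if `ρ` is absolutely continuous
with density `f`, `0 ≤ f ≤ 1` a.e. and total mass `m`; `+∞` otherwise. -/
noncomputable def rateTASEP (m : ℝ) (ρ : FiniteMeasure Circle') : ℝ≥0∞ :=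
  if (ρ : Measure Circle') ≪ (volume : Measure Circle')
      ∧ (∀ᵐ u ∂(volume : Measure Circle'),
          (((ρ : Measure Circle').rnDeriv volume u)).toReal ≤ 1)
      ∧ (ρ : Measure Circle') Set.univ = ENNReal.ofReal m
  then ENNReal.ofReal
    (∫ u, hFun m (((ρ : Measure Circle').rnDeriv volume u).toReal) ∂(volume : Measure Circle'))
  else ⊤

/-- The probability, under the uniform measure on configurations of `⌊Nm⌋` particles on
`ℤ/Nℤ`, that the empirical measure belongs to `C`. -/
noncomputable def probTASEP (m : ℝ) (N : ℕ) (C : Set (FiniteMeasure Circle')) : ℝ≥0∞ :=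
  ({S : Finset (ZMod N) | S.card = ⌊(N : ℝ) * m⌋₊ ∧ empTASEP N S ∈ C}.ncard : ℝ≥0∞)
    / (N.choose ⌊(N : ℝ) * m⌋₊ : ℝ≥0∞)

/-! ### Binomial asymptotics -/

lemma logFact_lower (n : ℕ) : 0 ≤ Real.log (n.factorial : ℝ) - (n * Real.log n - n) := by
  rcases Nat.eq_zero_or_pos n with rfl | hn
  · simp
  have h := Stirling.le_log_factorial_stirling hn.ne'
  have h1 : 0 ≤ Real.log n := Real.log_natCast_nonneg n
  have h2 : 0 ≤ Real.log (2 * Real.pi) := Real.log_nonneg (by nlinarith [Real.pi_gt_three])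
  linarith

lemma logFact_upper (n : ℕ) :
    Real.log (n.factorial : ℝ) - (n * Real.log n - n) ≤ Real.log (n + 1) + 1 := by
  rcases Nat.eq_zero_or_pos n with rfl | hn
  · simp
  obtain ⟨k, rfl⟩ : ∃ k, n = k + 1 := ⟨n - 1, by omega⟩
  have h := Stirling.log_stirlingSeq'_antitone (Nat.zero_le k)
  simp only [Function.comp, Nat.succ_eq_add_one] at h
  rw [Stirling.log_stirlingSeq_formula, Stirling.log_stirlingSeq_formula] at h
  have hk : (0:ℝ) < (k:ℝ) + 1 := by positivity
  have e1 : Real.log (((k+1 : ℕ):ℝ) / Real.exp 1) = Real.log ((k:ℝ)+1) - 1 := by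
    push_cast
    rw [Real.log_div hk.ne' (Real.exp_pos 1).ne', Real.log_exp]
  have e2 : Real.log (2 * ((k+1 : ℕ):ℝ)) = Real.log 2 + Real.log ((k:ℝ)+1) := by
    push_cast
    rw [Real.log_mul (by norm_num) hk.ne']
  rw [e1, e2] at h
  norm_num [Real.log_div] at h
  have h3 : 0 ≤ Real.log ((k:ℝ)+1) := Real.log_nonneg (by linarith [(Nat.cast_nonneg k : (0:ℝ) ≤ k)])
  have h4 : Real.log ((k:ℝ)+1) ≤ Real.log ((k:ℝ)+1+1) := Real.log_le_log hk (by linarith)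
  push_cast
  have hq : Real.log (Real.exp 1)⁻¹ = -1 := by rw [Real.log_inv, Real.log_exp]
  try rw [hq] at h
  nlinarith

lemma tendsto_log_succ_div :
    Tendsto (fun N : ℕ => (Real.log ((N:ℝ) + 1) + 1) / N) atTop (𝓝 0) := by
  have h1 : Tendsto (fun N : ℕ => Real.log ((N:ℝ) + 1) / ((N:ℝ)+1)) atTop (𝓝 0) := by
    have h := (Real.isLittleO_log_id_atTop).tendsto_div_nhds_zero
    exact (h.comp (tendsto_atTop_add_const_right atTop (1:ℝ) tendsto_natCast_atTop_atTop))
  have h2 : Tendsto (fun N : ℕ => ((N:ℝ)+1)/N) atTop (𝓝 1) := by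
    have : Tendsto (fun N : ℕ => 1 + 1/(N:ℝ)) atTop (𝓝 (1+0)) :=
      tendsto_const_nhds.add tendsto_one_div_atTop_nhds_zero_nat
    rw [add_zero] at this
    refine this.congr' ?_
    filter_upwards [eventually_gt_atTop 0] with N hN
    have : (N:ℝ) ≠ 0 := by positivity
    field_simp
    try ring
  have h3 := (h1.mul h2).add tendsto_one_div_atTop_nhds_zero_nat
  simp only [zero_mul, add_zero] at h3
  refine h3.congr' ?_
  filter_upwards [eventually_gt_atTop 0] with N hN
  have : (N:ℝ) ≠ 0 := by positivity
  have : (N:ℝ)+1 ≠ 0 := by positivity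
  field_simp

lemma logFact_asymp {n : ℕ → ℕ} {p : ℝ} (hle : ∀ N, n N ≤ N)
    (h : Tendsto (fun N : ℕ => (n N : ℝ) / N) atTop (𝓝 p)) :
    Tendsto (fun N : ℕ => Real.log ((n N).factorial : ℝ) / N - ((n N : ℝ) / N) * Real.log N
      + (n N : ℝ) / N) atTop (𝓝 (p * Real.log p)) := by
  have h1 : Tendsto (fun N : ℕ => ((n N : ℝ) / N) * Real.log ((n N : ℝ) / N)) atTop
      (𝓝 (p * Real.log p)) := (Real.continuous_mul_log.tendsto p).comp h
  have h2 : Tendsto (fun N : ℕ => (Real.log ((n N).factorial : ℝ)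
      - (n N * Real.log (n N) - n N)) / N) atTop (𝓝 0) := by
    refine tendsto_of_tendsto_of_tendsto_of_le_of_le tendsto_const_nhds tendsto_log_succ_div ?_ ?_
    · intro N
      exact div_nonneg (logFact_lower _) (Nat.cast_nonneg N)
    · intro N
      have := logFact_upper (n N)
      have h3 : Real.log ((n N : ℝ)+1) ≤ Real.log ((N:ℝ)+1) := by
        apply Real.log_le_log (by positivity)
        have : (n N : ℝ) ≤ N := by exact_mod_cast hle N
        linarith
      exact div_le_div_of_nonneg_right (by linarith) (Nat.cast_nonneg N)
  have h3 := h1.add h2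
  rw [add_zero] at h3
  refine h3.congr' ?_
  filter_upwards [eventually_gt_atTop 0] with N hN
  have hN' : (N:ℝ) ≠ 0 := by positivity
  rcases Nat.eq_zero_or_pos (n N) with h0 | h0
  · simp [h0]
  have h0' : (n N:ℝ) ≠ 0 := by positivity
  rw [Real.log_div h0' hN']
  field_simp
  ring

/-- exponential asymptotics of binomial coefficients -/
lemma choose_asymp {L n : ℕ → ℕ} {l p : ℝ} (hl : 0 < l) (hL : ∀ N, L N ≤ N) (hn : ∀ N, n N ≤ L N)
    (h1 : Tendsto (fun N : ℕ => (L N : ℝ) / N) atTop (𝓝 l))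
    (h2 : Tendsto (fun N : ℕ => (n N : ℝ) / N) atTop (𝓝 p)) (hp0 : 0 ≤ p) (hpl : p ≤ l) :
    Tendsto (fun N : ℕ => Real.log ((L N).choose (n N) : ℝ) / N) atTop
      (𝓝 (l * Real.binEntropy (p / l))) := by
  have h3 : Tendsto (fun N : ℕ => ((L N - n N : ℕ) : ℝ) / N) atTop (𝓝 (l - p)) := by
    refine (h1.sub h2).congr fun N => ?_
    rw [Nat.cast_sub (hn N)]; ring
  have a1 := logFact_asymp hL h1
  have a2 := logFact_asymp (fun N => (hn N).trans (hL N)) h2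
  have a3 := logFact_asymp (fun N => (Nat.sub_le _ _).trans (hL N)) h3
  have a4 := (a1.sub a2).sub a3
  have e : l * Real.log l - p * Real.log p - (l - p) * Real.log (l - p)
      = l * Real.binEntropy (p / l) := by
    unfold Real.binEntropy
    have q1 : p * Real.log (p/l)⁻¹ = p * Real.log l - p * Real.log p := by
      rcases hp0.eq_or_lt with h | h
      · simp [← h]
      rw [Real.log_inv, Real.log_div h.ne' hl.ne']; ring
    have q2 : (l - p) * Real.log ((l-p)/l)⁻¹ = (l-p) * Real.log l - (l-p) * Real.log (l-p) := by
      rcases hpl.eq_or_lt with h | h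
      · simp [← h]
      rw [Real.log_inv, Real.log_div (by linarith) hl.ne']; ring
    have q3 : 1 - p / l = (l - p)/l := by field_simp
    rw [q3]
    have : l * (p / l * Real.log (p / l)⁻¹ + (l - p) / l * Real.log ((l - p) / l)⁻¹)
      = p * Real.log (p/l)⁻¹ + (l - p) * Real.log ((l-p)/l)⁻¹ := by
      field_simp
    rw [this, q1, q2]; ring
  rw [e] at a4
  refine a4.congr fun N => ?_
  have f := Nat.choose_mul_factorial_mul_factorial (hn N)
  have f' : Real.log ((L N).factorial : ℝ) = Real.log ((L N).choose (n N) : ℝ) +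
     Real.log ((n N).factorial : ℝ) + Real.log ((L N - n N).factorial : ℝ) := by
    rw [← f]
    push_cast
    have c : (0:ℝ) < (L N).choose (n N) := by exact_mod_cast Nat.choose_pos (hn N)
    rw [Real.log_mul (by positivity) (by positivity), Real.log_mul (by positivity) (by positivity)]
  rw [f', Nat.cast_sub (hn N)]
  ring


/-! ### Geometry of the circle -/

def tau (u : Circle') : ℝ := (AddCircle.equivIco (1:ℝ) 0 u : ℝ)

lemma tau_mem (u : Circle') : 0 ≤ tau u ∧ tau u < 1 := by
  have := (AddCircle.equivIco (1:ℝ) 0 u).2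
  simpa [tau] using this

lemma coe_tau (u : Circle') : ((tau u : ℝ) : Circle') = u :=
  (AddCircle.equivIco (1:ℝ) 0).symm_apply_apply u

lemma tau_coe {t : ℝ} (h0 : 0 ≤ t) (h1 : t < 1) : tau (t : Circle') = t := by
  have h := AddCircle.coe_equivIco_mk_apply (𝕜 := ℝ) 1 t
  rw [tau, h]
  simp [Int.fract_eq_self.2 ⟨h0, h1⟩]

lemma measurable_tau : Measurable tau :=
  measurable_subtype_coe.comp (AddCircle.measurableEquivIco (1:ℝ) 0).measurable

def arc (s t : ℝ) : Set Circle' := tau ⁻¹' Ico s t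

lemma measurableSet_arc (s t : ℝ) : MeasurableSet (arc s t) := measurable_tau measurableSet_Ico

lemma volume_arc {s t : ℝ} (hs : 0 ≤ s) (ht : t ≤ 1) :
    (volume : Measure Circle') (arc s t) = ENNReal.ofReal (t - s) := by
  have h := (AddCircle.measurePreserving_mk (1:ℝ) 0).measure_preimage
    (measurableSet_arc s t).nullMeasurableSet
  rw [← h, Measure.restrict_congr_set Ioo_ae_eq_Ioc.symm, ]
  rw [Measure.restrict_apply (AddCircle.measurable_mk' (measurableSet_arc s t))]
  have : ((QuotientAddGroup.mk : ℝ → AddCircle (1:ℝ)) ⁻¹' arc s t ∩ Ioo 0 (0+1)) =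
      Ico s t ∩ Ioo 0 1 := by
    ext x
    simp only [mem_inter_iff, mem_preimage, arc, zero_add]
    refine and_congr_left fun hx => ?_
    have := tau_coe hx.1.le hx.2
    change tau (x : Circle') ∈ _ ↔ _
    rw [this]
  rw [this]
  apply le_antisymm
  · calc volume (Ico s t ∩ Ioo 0 1) ≤ volume (Ico s t) := measure_mono inter_subset_left
      _ = _ := Real.volume_Ico
  · calc ENNReal.ofReal (t - s) = volume (Ioo s t) := Real.volume_Ioo.symm
      _ ≤ volume (Ico s t ∩ Ioo 0 1) := measure_mono fun x hx => ⟨⟨hx.1.le, hx.2⟩, by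
        constructor <;> linarith [hx.1, hx.2]⟩

lemma dist_circle_le (s t : ℝ) : dist (s : Circle') (t : Circle') ≤ |s - t| := by
  rw [dist_eq_norm, ← AddCircle.coe_sub]
  exact QuotientAddGroup.norm_mk_le_norm

lemma approx_integral (μ ρ : Measure Circle') [IsFiniteMeasure μ] [IsFiniteMeasure ρ] {k : ℕ}
    (A : Fin k → Set Circle') (hA : ∀ j, MeasurableSet (A j))
    (hd : Pairwise (Function.onFun Disjoint A)) (hU : ⋃ j, A j = univ)
    (φ : C(Circle', ℝ)) (M ε : ℝ) (hM : ∀ u, |φ u| ≤ M) (hε : 0 ≤ ε)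
    (hosc : ∀ j, ∀ u ∈ A j, ∀ v ∈ A j, |φ u - φ v| ≤ ε)
    (hμ : μ.real univ ≤ 1) (hρ : ρ.real univ ≤ 1) :
    |∫ u, φ u ∂μ - ∫ u, φ u ∂ρ| ≤ 2 * ε + M * ∑ j, |μ.real (A j) - ρ.real (A j)| := by
  have hint : ∀ (ν : Measure Circle') [IsFiniteMeasure ν], Integrable φ ν := fun ν _ =>
    (BoundedContinuousFunction.mkOfCompact φ).integrable ν
  have hdec : ∀ (ν : Measure Circle') [IsFiniteMeasure ν],
      ∫ u, φ u ∂ν = ∑ j, ∫ u in A j, φ u ∂ν := by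
    intro ν _
    rw [← integral_iUnion_fintype hA hd (fun j => (hint ν).integrableOn), hU, Measure.restrict_univ]
  have hmass : ∀ (ν : Measure Circle') [IsFiniteMeasure ν], ν.real univ = ∑ j, ν.real (A j) := by
    intro ν _
    rw [← hU, measureReal_iUnion_fintype hd hA]
  have key : ∀ (ν : Measure Circle') [IsFiniteMeasure ν] (j : Fin k) (c : Circle'), c ∈ A j →
      |∫ u in A j, φ u ∂ν - φ c * ν.real (A j)| ≤ ε * ν.real (A j) := by
    intro ν _ j c hc
    have : ∫ u in A j, φ u ∂ν - φ c * ν.real (A j) = ∫ u in A j, (φ u - φ c) ∂ν := by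
      rw [integral_sub (hint ν).integrableOn (integrable_const _)]
      simp [mul_comm]
    rw [this, ← Real.norm_eq_abs]
    exact norm_setIntegral_le_of_norm_le_const (measure_lt_top _ _)
      (fun u hu => by simpa using hosc j u hu c hc)
  have term : ∀ j, |∫ u in A j, φ u ∂μ - ∫ u in A j, φ u ∂ρ| ≤
      ε * μ.real (A j) + ε * ρ.real (A j) + M * |μ.real (A j) - ρ.real (A j)| := by
    intro j
    rcases (A j).eq_empty_or_nonempty with h | ⟨c, hc⟩
    · simp [h]
    have k1 := key μ j c hc
    have k2 := key ρ j c hc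
    have k3 : |φ c * (μ.real (A j) - ρ.real (A j))| ≤ M * |μ.real (A j) - ρ.real (A j)| := by
      rw [abs_mul]; exact mul_le_mul_of_nonneg_right (hM c) (abs_nonneg _)
    rw [abs_le] at *
    constructor <;> linarith [k1.1, k1.2, k2.1, k2.2, k3.1, k3.2]
  rw [hdec μ, hdec ρ, ← Finset.sum_sub_distrib]
  calc _ ≤ ∑ j, |∫ u in A j, φ u ∂μ - ∫ u in A j, φ u ∂ρ| := Finset.abs_sum_le_sum_abs _ _
    _ ≤ ∑ j, (ε * μ.real (A j) + ε * ρ.real (A j) + M * |μ.real (A j) - ρ.real (A j)|) :=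
        Finset.sum_le_sum fun j _ => term j
    _ = ε * μ.real univ + ε * ρ.real univ + M * ∑ j, |μ.real (A j) - ρ.real (A j)| := by
        rw [hmass μ, hmass ρ, Finset.sum_add_distrib, Finset.sum_add_distrib, Finset.mul_sum,
          Finset.mul_sum, Finset.mul_sum]
    _ ≤ _ := by nlinarith

/-- division points -/
def pt (N k j : ℕ) : ℕ := N * j / k

lemma pt_zero (N k : ℕ) : pt N k 0 = 0 := by simp [pt]
lemma pt_last (N : ℕ) {k : ℕ} (hk : 0 < k) : pt N k k = N := by
  simp [pt, Nat.mul_div_cancel _ hk]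
lemma pt_mono (N k : ℕ) : Monotone (pt N k) := fun _ _ h =>
  Nat.div_le_div_right (Nat.mul_le_mul_left N h)
lemma pt_le (N : ℕ) {k j : ℕ} (h : j ≤ k) (hk : 0 < k) : pt N k j ≤ N := by
  conv_rhs => rw [← pt_last N hk]
  exact pt_mono N k h

lemma pt_le_real (N k j : ℕ) (hk : 0 < k) : (pt N k j : ℝ) ≤ N * (j / k) := by
  have : ((N * j / k : ℕ) : ℝ) ≤ ((N * j : ℕ) : ℝ) / k := Nat.cast_div_le
  calc _ ≤ _ := this
    _ = _ := by push_cast; ring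

lemma lt_pt_real (N k j : ℕ) (hk : 0 < k) : (N : ℝ) * (j / k) < pt N k j + 1 := by
  have h : N * j < k * (pt N k j + 1) := Nat.lt_mul_div_succ _ hk
  have h' : (N : ℝ) * j < k * (pt N k j + 1) := by exact_mod_cast h
  have hk' : (0:ℝ) < k := by exact_mod_cast hk
  rw [← mul_div_assoc, div_lt_iff₀ hk']
  linarith

def cell (N k : ℕ) (j : Fin k) : Set Circle' := arc ((pt N k j : ℝ) / N) ((pt N k (j+1) : ℝ) / N)

lemma cell_mono (N k : ℕ) : Monotone (fun j => (pt N k j : ℝ) / N) := fun _ _ h =>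
  div_le_div_of_nonneg_right (by exact_mod_cast pt_mono N k h) (Nat.cast_nonneg N)

lemma cell_disjoint (N k : ℕ) : Pairwise (Function.onFun Disjoint (cell N k)) := by
  intro i j hij
  have h := (cell_mono N k).pairwise_disjoint_on_Ico_succ
  have h' := h (Fin.val_injective.ne hij)
  exact h'.preimage tau

lemma exists_cell_aux {s : ℕ → ℝ} {k : ℕ} {x : ℝ} (h0 : s 0 ≤ x) (hk : x < s k) :
    ∃ j : Fin k, s j ≤ x ∧ x < s (j+1) := by
  induction k with
  | zero => linarith
  | succ k ih =>
    by_cases h : x < s k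
    · obtain ⟨j, hj⟩ := ih h
      exact ⟨j.castSucc, by simpa using hj⟩
    · exact ⟨Fin.last k, by simpa using ⟨not_lt.1 h, hk⟩⟩

lemma cell_cover {N k : ℕ} (hN : 0 < N) (hk : 0 < k) : ⋃ j, cell N k j = univ := by
  ext u
  simp only [mem_iUnion, mem_univ, iff_true]
  have hN' : (N:ℝ) ≠ 0 := by positivity
  obtain ⟨j, hj⟩ := exists_cell_aux (s := fun j => (pt N k j : ℝ) / N) (k := k) (x := tau u)
    (by simpa [pt_zero] using (tau_mem u).1) (by simpa [pt_last N hk, hN'] using (tau_mem u).2)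
  exact ⟨j, hj⟩

lemma cell_width {N k : ℕ} (hN : 0 < N) (hk : 0 < k) (j : ℕ) :
    (pt N k (j+1) : ℝ) / N - (pt N k j : ℝ) / N ≤ 1 / k + 1 / N := by
  have h1 := pt_le_real N k (j+1) hk
  have h2 := lt_pt_real N k j hk
  have hN' : (0:ℝ) < N := by positivity
  have hk' : (0:ℝ) < k := by exact_mod_cast hk
  rw [← sub_div, div_le_iff₀ hN']
  have e : (1 / (k:ℝ) + 1 / N) * N = N / k + 1 := by field_simp
  have e2 : (N:ℝ) * (((j+1:ℕ):ℝ)/k) = N * (j/k) + N / k := by push_cast; ring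
  rw [e]
  linarith

lemma cell_osc (φ : C(Circle', ℝ)) {ε : ℝ} (hε : 0 < ε) : ∃ δ > 0, ∀ N k : ℕ, 0 < N → 0 < k →
    1 / (k:ℝ) + 1 / N < δ → ∀ j : Fin k, ∀ u ∈ cell N k j, ∀ v ∈ cell N k j, |φ u - φ v| ≤ ε := by
  have hu := CompactSpace.uniformContinuous_of_continuous φ.continuous
  obtain ⟨δ, hδ, h⟩ := Metric.uniformContinuous_iff.1 hu ε hε
  refine ⟨δ, hδ, fun N k hN hk hNk j u hu v hv => ?_⟩
  have hw := cell_width hN hk j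
  have : dist u v < δ := by
    rw [← coe_tau u, ← coe_tau v]
    refine (dist_circle_le _ _).trans_lt ?_
    have a := hu.1
    have b := hu.2
    have c := hv.1
    have d := hv.2
    rw [abs_lt]
    constructor <;> linarith
  exact (h this).le

/-! ### The empirical measure -/

lemma emp_toMeasure (N : ℕ) (S : Finset (ZMod N)) : (empTASEP N S : Measure Circle') =
    ((N : ℝ≥0))⁻¹ • ∑ x ∈ S, Measure.dirac ((((x.val : ℝ) / (N : ℝ) : ℝ)) : Circle') := by
  rw [empTASEP, FiniteMeasure.toMeasure_smul, FiniteMeasure.toMeasure_sum]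
  rfl

lemma emp_integral (N : ℕ) (S : Finset (ZMod N)) (φ : C(Circle', ℝ)) :
    ∫ u, φ u ∂(empTASEP N S : Measure Circle') =
      (N:ℝ)⁻¹ * ∑ x ∈ S, φ (((x.val : ℝ) / (N : ℝ) : ℝ) : Circle') := by
  rw [emp_toMeasure, integral_smul_nnreal_measure, integral_finsetSum_measure]
  · simp [NNReal.smul_def]
  · intro i _
    exact (BoundedContinuousFunction.mkOfCompact φ).integrable _

lemma emp_real (N : ℕ) (S : Finset (ZMod N)) {A : Set Circle'} (hA : MeasurableSet A)
    [DecidablePred fun x : ZMod N => (((x.val : ℝ) / (N : ℝ) : ℝ) : Circle') ∈ A] :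
    (empTASEP N S : Measure Circle').real A =
      ((S.filter fun x => (((x.val : ℝ) / (N : ℝ) : ℝ) : Circle') ∈ A).card : ℝ) / N := by
  rw [emp_toMeasure, Measure.real, Measure.smul_apply, Measure.finsetSum_apply]
  simp only [Measure.dirac_apply' _ hA]
  rw [Finset.card_filter]
  simp only [indicator_apply, Pi.one_apply]
  rw [ENNReal.toReal_smul, ENNReal.toReal_sum]
  · rw [NNReal.smul_def]
    push_cast
    rw [smul_eq_mul, div_eq_inv_mul]
    congr 1
    refine Finset.sum_congr rfl fun x _ => ?_
    split_ifs <;> simp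
  · intro x _; split_ifs <;> simp

lemma emp_real_univ (N : ℕ) (S : Finset (ZMod N)) :
    (empTASEP N S : Measure Circle').real univ = (S.card : ℝ) / N := by
  classical
  rw [emp_real N S MeasurableSet.univ]
  simp

lemma emp_real_le_one {N : ℕ} (hN : 0 < N) (S : Finset (ZMod N)) :
    (empTASEP N S : Measure Circle').real univ ≤ 1 := by
  have : NeZero N := ⟨hN.ne'⟩
  rw [emp_real_univ]
  apply div_le_one_of_le₀ _ (Nat.cast_nonneg _)
  have := S.card_le_univ
  rw [ZMod.card] at this
  exact_mod_cast this

lemma site_mem_cell {N k : ℕ} [NeZero N] (j : Fin k) (x : ZMod N) :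
    ((((x.val : ℝ) / (N : ℝ) : ℝ) : Circle') ∈ cell N k j) ↔
      pt N k j ≤ x.val ∧ x.val < pt N k (j+1) := by
  have hN : (0:ℝ) < N := by exact_mod_cast NeZero.pos N
  have hx : (x.val : ℝ) < N := by exact_mod_cast x.val_lt
  rw [cell, arc, mem_preimage, tau_coe (by positivity) ((div_lt_one hN).2 hx), mem_Ico,
    div_le_div_iff_of_pos_right hN, div_lt_div_iff_of_pos_right hN]
  norm_cast

def sites (N k : ℕ) [NeZero N] (j : Fin k) : Finset (ZMod N) :=
  Finset.univ.filter fun x => pt N k j ≤ x.val ∧ x.val < pt N k (j+1)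

lemma card_sites {N k : ℕ} [NeZero N] (j : Fin k) :
    (sites N k j).card = pt N k (j+1) - pt N k j := by
  rw [← Nat.card_Ico]
  refine Finset.card_nbij (fun x => x.val) ?_ ?_ ?_
  · intro x hx
    simpa [sites] using hx
  · intro x _ y _ h
    exact ZMod.val_injective N h
  · intro y hy
    simp only [Finset.coe_Ico, mem_Ico] at hy
    have hk : 0 < k := j.pos
    have hyN : y < N := hy.2.trans_le (pt_le N j.2 hk)
    exact ⟨(y : ZMod N), by simp [sites, ZMod.val_natCast_of_lt hyN, hy], ZMod.val_natCast_of_lt hyN⟩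

lemma emp_real_cell {N k : ℕ} [NeZero N] (S : Finset (ZMod N)) (j : Fin k) :
    (empTASEP N S : Measure Circle').real (cell N k j) = ((S ∩ sites N k j).card : ℝ) / N := by
  classical
  rw [emp_real N S (A := cell N k j) (measurableSet_arc _ _)]
  congr 3
  ext x
  simp only [Finset.mem_filter, Finset.mem_inter, sites, site_mem_cell, Finset.mem_univ, true_and]


/-! ### Riemann sums and the exponential Chebyshev bound -/

lemma riemann_sum (φ : C(Circle', ℝ)) {ε : ℝ} (hε : 0 < ε) : ∃ N0 : ℕ, ∀ N ≥ N0, ∀ [NeZero N],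
    |(N:ℝ)⁻¹ * ∑ x : ZMod N, φ (((x.val : ℝ) / (N : ℝ) : ℝ) : Circle') - ∫ u, φ u| ≤ ε := by
  obtain ⟨δ, hδ, h⟩ := cell_osc φ (half_pos hε)
  obtain ⟨N0, hN0⟩ := exists_nat_gt (2 / δ)
  refine ⟨N0, fun N hN _ => ?_⟩
  have hpos : 0 < N := NeZero.pos N
  have hN' : (0:ℝ) < N := by exact_mod_cast hpos
  have hw : 1 / (N:ℝ) + 1 / N < δ := by
    have : 2 / δ < N := hN0.trans_le (by exact_mod_cast hN)
    rw [div_lt_iff₀ hδ] at this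
    rw [← add_div, div_lt_iff₀ hN']
    linarith
  have hosc := h N N hpos hpos hw
  have hM : ∀ u, |φ u| ≤ ‖φ‖ := fun u => φ.norm_coe_le_norm u
  have := approx_integral (empTASEP N (Finset.univ : Finset (ZMod N)) : Measure Circle') volume
    (cell N N) (fun j => measurableSet_arc _ _) (cell_disjoint N N) (cell_cover hpos hpos) φ ‖φ‖ (ε/2)
    hM (half_pos hε).le hosc (emp_real_le_one hpos _) (by simp [Measure.real])
  rw [emp_integral] at this
  have z : ∀ j, |(empTASEP N (Finset.univ : Finset (ZMod N)) : Measure Circle').real (cell N N j) -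
      (volume : Measure Circle').real (cell N N j)| = 0 := by
    intro j
    rw [emp_real_cell, Finset.univ_inter, card_sites, Measure.real, cell, volume_arc (by positivity)
      (by rw [div_le_one hN']; exact_mod_cast pt_le N j.2 hpos)]
    have hm := pt_mono N N (Nat.le_succ (j:ℕ))
    have hm' : (pt N N j : ℝ) ≤ pt N N (j+1) := by exact_mod_cast hm
    rw [ENNReal.toReal_ofReal (by rw [← sub_div]; exact div_nonneg (by linarith) hN'.le),
      Nat.cast_sub hm, sub_div, sub_self, abs_zero]
  rw [Finset.sum_congr rfl fun j _ => z j] at this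
  refine this.trans ?_
  simp
  linarith

lemma chebyshev {m : ℝ} (hm0 : 0 < m) (hm1 : m < 1) {N : ℕ} [NeZero N] (K : ℕ)
    (φ : C(Circle', ℝ)) (a : ℝ) :
    ({S : Finset (ZMod N) | S.card = K ∧ empTASEP N S ∈
      {μ : FiniteMeasure Circle' | a < ∫ u, φ u ∂(μ : Measure Circle')}}.ncard : ℝ)
      * (m ^ K * (1 - m) ^ (N - K) * Real.exp (N * a)) ≤
    Real.exp (∑ x : ZMod N, Real.log (1 - m + m * Real.exp
      (φ (((x.val : ℝ) / (N : ℝ) : ℝ) : Circle')))) := by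
  classical
  have hN' : (0:ℝ) < N := by exact_mod_cast NeZero.pos N
  have hpos : ∀ t : ℝ, 0 < 1 - m + m * Real.exp t := fun t => by
    have := mul_pos hm0 (Real.exp_pos t)
    linarith
  set g : ZMod N → ℝ := fun x => φ (((x.val : ℝ) / (N : ℝ) : ℝ) : Circle') with hg
  have hR : Real.exp (∑ x : ZMod N, Real.log (1 - m + m * Real.exp (g x))) =
      ∑ S : Finset (ZMod N), (∏ x ∈ S, (m * Real.exp (g x))) * ∏ x ∈ Finset.univ \ S, (1 - m) := by
    rw [Real.exp_sum]
    simp only [Real.exp_log (hpos _)]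
    rw [← Finset.powerset_univ, ← Finset.prod_add]
    simp only [add_comm]
  rw [hR]
  set A := {S : Finset (ZMod N) | S.card = K ∧ empTASEP N S ∈
      {μ : FiniteMeasure Circle' | a < ∫ u, φ u ∂(μ : Measure Circle')}} with hA
  rw [ncard_eq_toFinset_card' A, ← nsmul_eq_mul]
  have hnn : ∀ S : Finset (ZMod N),
      0 ≤ (∏ x ∈ S, (m * Real.exp (g x))) * ∏ x ∈ Finset.univ \ S, (1 - m) := by
    intro S
    refine mul_nonneg (Finset.prod_nonneg fun x _ => ?_) (Finset.prod_nonneg fun x _ => by linarith)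
    positivity
  refine le_trans (Finset.card_nsmul_le_sum A.toFinset _ _ ?_)
    (Finset.sum_le_sum_of_subset_of_nonneg (Finset.subset_univ _) fun S _ _ => hnn S)
  intro S hS
  rw [Set.mem_toFinset, hA] at hS
  obtain ⟨hc, he⟩ := hS
  simp only [mem_ofPred_eq] at he
  rw [emp_integral] at he
  have he' : N * a ≤ ∑ x ∈ S, g x := by
    rw [lt_inv_mul_iff₀ hN'] at he
    exact he.le
  rw [Finset.prod_mul_distrib, Finset.prod_const, Finset.prod_const, hc,
    Finset.card_sdiff_of_subset (Finset.subset_univ _), hc, Finset.card_univ, ZMod.card,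
    ← Real.exp_sum]
  have h1 := Real.exp_le_exp.2 he'
  have h2 : 0 < 1 - m := by linarith
  calc _ ≤ m ^ K * (1 - m) ^ (N - K) * Real.exp (∑ x ∈ S, g x) := by gcongr
    _ = _ := by ring

lemma floor_le_N {m : ℝ} (hm0 : 0 < m) (hm1 : m < 1) (N : ℕ) : ⌊(N:ℝ) * m⌋₊ ≤ N := by
  have : (N:ℝ) * m ≤ N := by nlinarith [(Nat.cast_nonneg N : (0:ℝ) ≤ N)]
  exact Nat.floor_le_of_le this

lemma floor_div_tendsto {m : ℝ} (hm0 : 0 < m) :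
    Tendsto (fun N : ℕ => (⌊(N:ℝ) * m⌋₊ : ℝ) / N) atTop (𝓝 m) := by
  have h := (tendsto_nat_floor_mul_div_atTop (R := ℝ) hm0.le).comp tendsto_natCast_atTop_atTop
  refine h.congr fun N => ?_
  simp [mul_comm]

lemma choose_floor_asymp {m : ℝ} (hm0 : 0 < m) (hm1 : m < 1) :
    Tendsto (fun N : ℕ => Real.log (N.choose ⌊(N:ℝ) * m⌋₊ : ℝ) / N) atTop
      (𝓝 (Real.binEntropy m)) := by
  have h := choose_asymp (L := fun N => N) (n := fun N => ⌊(N:ℝ) * m⌋₊) (l := 1) (p := m) one_pos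
    (fun N => le_rfl) (floor_le_N hm0 hm1) (by
      refine tendsto_const_nhds.congr' ?_
      filter_upwards [eventually_gt_atTop 0] with N hN
      have : (N:ℝ) ≠ 0 := by positivity
      rw [div_self this]) (floor_div_tendsto hm0) hm0.le hm1.le
  simpa using h

lemma prob_eq {m : ℝ} (hm0 : 0 < m) (hm1 : m < 1) (N : ℕ) (C : Set (FiniteMeasure Circle')) :
    probTASEP m N C = ENNReal.ofReal
      (({S : Finset (ZMod N) | S.card = ⌊(N : ℝ) * m⌋₊ ∧ empTASEP N S ∈ C}.ncard : ℝ)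
        / (N.choose ⌊(N : ℝ) * m⌋₊ : ℝ)) := by
  have hc : (0:ℝ) < N.choose ⌊(N : ℝ) * m⌋₊ := by
    exact_mod_cast Nat.choose_pos (floor_le_N hm0 hm1 N)
  rw [probTASEP, ENNReal.ofReal_div_of_pos hc, ENNReal.ofReal_natCast, ENNReal.ofReal_natCast]

lemma halfspace_bound {m : ℝ} (hm0 : 0 < m) (hm1 : m < 1) (φ : C(Circle', ℝ)) (a α : ℝ)
    (h : (∫ u, Real.log (1 - m + m * Real.exp (φ u))) - a < -α) :
    ∀ᶠ N : ℕ in atTop, probTASEP m N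
      {μ : FiniteMeasure Circle' | a < ∫ u, φ u ∂(μ : Measure Circle')} ≤
        ENNReal.ofReal (Real.exp (-(N * α))) := by
  have hpos : ∀ t : ℝ, 0 < 1 - m + m * Real.exp t := fun t => by
    have := mul_pos hm0 (Real.exp_pos t)
    linarith
  have h1m : 0 < 1 - m := by linarith
  let ψ : C(Circle', ℝ) := ⟨fun u => Real.log (1 - m + m * Real.exp (φ u)), by
    refine Continuous.log (by fun_prop) fun u => (hpos _).ne'⟩
  set ε := (-α - ((∫ u, Real.log (1 - m + m * Real.exp (φ u))) - a)) / 2 with hε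
  have hεp : 0 < ε := by rw [hε]; linarith
  obtain ⟨N0, hN0⟩ := riemann_sum ψ hεp
  have hlim : Tendsto (fun N : ℕ => Real.log (N.choose ⌊(N:ℝ) * m⌋₊ : ℝ) / N +
      (⌊(N:ℝ) * m⌋₊ : ℝ) / N * Real.log m + (1 - (⌊(N:ℝ) * m⌋₊ : ℝ) / N) * Real.log (1 - m)) atTop
      (𝓝 0) := by
    have := ((choose_floor_asymp hm0 hm1).add ((floor_div_tendsto hm0).mul_const (Real.log m))).add
      (((floor_div_tendsto hm0).const_sub 1).mul_const (Real.log (1 - m)))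
    convert this using 2
    rw [Real.binEntropy, Real.log_inv, Real.log_inv]; ring
  filter_upwards [eventually_ge_atTop N0, eventually_gt_atTop 0,
    hlim.eventually (lt_mem_nhds (show -ε < 0 by linarith))] with N hN hNpos hl
  have : NeZero N := ⟨hNpos.ne'⟩
  have hN' : (0:ℝ) < N := by exact_mod_cast hNpos
  rw [prob_eq hm0 hm1]
  apply ENNReal.ofReal_le_ofReal
  have hR := hN0 N hN
  have hC := chebyshev hm0 hm1 (N := N) ⌊(N:ℝ) * m⌋₊ φ a
  have hK := floor_le_N hm0 hm1 N
  set K := ⌊(N:ℝ) * m⌋₊ with hKdef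
  have hc : (0:ℝ) < N.choose K := by exact_mod_cast Nat.choose_pos hK
  rw [div_le_iff₀ hc]
  set n := ({S : Finset (ZMod N) | S.card = K ∧ empTASEP N S ∈
      {μ : FiniteMeasure Circle' | a < ∫ u, φ u ∂(μ : Measure Circle')}}.ncard : ℝ)
  have hw : 0 < m ^ K * (1 - m) ^ (N - K) * Real.exp (N * a) := by positivity
  refine le_of_mul_le_mul_right (hC.trans ?_) hw
  rw [← Real.le_log_iff_exp_le (by positivity)]
  rw [Real.log_mul (by positivity) (by positivity), Real.log_mul (by positivity) (by positivity),
    Real.log_mul (by positivity) (by positivity), Real.log_mul (by positivity) (by positivity),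
    Real.log_exp, Real.log_exp, Real.log_pow, Real.log_pow, Nat.cast_sub hK]
  have hR' := (abs_le.1 hR).2
  have hR2 : ∑ x : ZMod N, Real.log (1 - m + m * Real.exp
      (φ (((x.val : ℝ) / (N : ℝ) : ℝ) : Circle'))) ≤
      N * ((∫ u, Real.log (1 - m + m * Real.exp (φ u))) + ε) := by
    rw [← inv_mul_le_iff₀ hN']
    have : (N:ℝ)⁻¹ * ∑ x : ZMod N, Real.log (1 - m + m * Real.exp
      (φ (((x.val : ℝ) / (N : ℝ) : ℝ) : Circle'))) - ∫ u, Real.log (1 - m + m * Real.exp (φ u)) ≤ ε := hR'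
    linarith
  refine hR2.trans ?_
  have hl' : N * (-ε) ≤ N * (Real.log (N.choose K : ℝ) / N +
      (K : ℝ) / N * Real.log m + (1 - (K : ℝ) / N) * Real.log (1 - m)) :=
    mul_le_mul_of_nonneg_left hl.le hN'.le
  have e : N * (Real.log (N.choose K : ℝ) / N +
      (K : ℝ) / N * Real.log m + (1 - (K : ℝ) / N) * Real.log (1 - m)) =
      Real.log (N.choose K : ℝ) + K * Real.log m + (N - K) * Real.log (1 - m) := by
    field_simp
  rw [e] at hl'
  have : ∫ u, Real.log (1 - m + m * Real.exp (φ u)) = -α + a - 2 * ε := by rw [hε]; ring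
  rw [this]
  nlinarith


/-! ### Duality -/

lemma hFun_eq {m : ℝ} (hm0 : 0 < m) (hm1 : m < 1) (x : ℝ) :
    hFun m x = -Real.binEntropy x - x * Real.log m - (1 - x) * Real.log (1 - m) := by
  have key : ∀ y c : ℝ, 0 < c → y * Real.log (y / c) = y * Real.log y - y * Real.log c := by
    intro y c hc
    by_cases hy : y = 0
    · simp [hy]
    rw [Real.log_div hy hc.ne']; ring
  rw [hFun, key x m hm0, key (1-x) (1-m) (by linarith), Real.binEntropy, Real.log_inv, Real.log_inv]
  ring

lemma continuous_hFun {m : ℝ} (hm0 : 0 < m) (hm1 : m < 1) : Continuous (hFun m) := by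
  have : hFun m = fun x => -Real.binEntropy x - x * Real.log m - (1 - x) * Real.log (1 - m) :=
    funext (hFun_eq hm0 hm1)
  rw [this]
  have := Real.binEntropy_continuous
  fun_prop

/-- the log-Laplace transform of a Bernoulli variable -/
def lam (m t : ℝ) : ℝ := Real.log (1 - m + m * Real.exp t)

lemma lam_pos {m : ℝ} (hm0 : 0 < m) (hm1 : m < 1) (t : ℝ) : 0 < 1 - m + m * Real.exp t := by
  have := mul_pos hm0 (Real.exp_pos t)
  linarith

lemma continuous_lam {m : ℝ} (hm0 : 0 < m) (hm1 : m < 1) : Continuous (lam m) :=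
  Continuous.log (by fun_prop) fun u => (lam_pos hm0 hm1 u).ne'

lemma lam_lip {m : ℝ} (hm0 : 0 < m) (hm1 : m < 1) (s t : ℝ) : lam m s ≤ lam m t + |s - t| := by
  have h : 1 - m + m * Real.exp s ≤ (1 - m + m * Real.exp t) * Real.exp |s - t| := by
    have h1 : 1 ≤ Real.exp |s - t| := Real.one_le_exp (abs_nonneg _)
    have h2 : Real.exp s ≤ Real.exp t * Real.exp |s - t| := by
      rw [← Real.exp_add]; exact Real.exp_le_exp.2 (by linarith [le_abs_self (s - t)])
    nlinarith
  calc lam m s ≤ Real.log ((1 - m + m * Real.exp t) * Real.exp |s - t|) :=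
        Real.log_le_log (lam_pos hm0 hm1 s) h
    _ = _ := by rw [Real.log_mul (lam_pos hm0 hm1 t).ne' (Real.exp_pos _).ne', Real.log_exp, lam]

lemma lam_le {m : ℝ} (hm0 : 0 < m) (hm1 : m < 1) {t : ℝ} (ht : 0 ≤ t) : lam m t ≤ t := by
  have := lam_lip hm0 hm1 t 0
  simp [lam, abs_of_nonneg ht] at this
  exact this

lemma integrable_cm (φ : C(Circle', ℝ)) (ν : Measure Circle') [IsFiniteMeasure ν] :
    Integrable φ ν := (BoundedContinuousFunction.mkOfCompact φ).integrable ν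

lemma dual_sing {m : ℝ} (hm0 : 0 < m) (hm1 : m < 1) (ρ : Measure Circle') [IsFiniteMeasure ρ]
    (h : ¬ ρ ≤ volume) (α : ℝ) :
    ∃ φ : C(Circle', ℝ), (∫ u, lam m (φ u)) - ∫ u, φ u ∂ρ < -α := by
  obtain ⟨g, hg0, hg⟩ : ∃ g : C(Circle', ℝ), (∀ u, 0 ≤ g u) ∧ (∫ u, g u) < ∫ u, g u ∂ρ := by
    rw [Measure.le_iff] at h
    push Not at h
    obtain ⟨A, hA, hlt⟩ := h
    obtain ⟨F, hFA, hF, hFlt⟩ := MeasurableSet.exists_lt_isClosed_of_ne_top hA (measure_ne_top ρ A) hlt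
    have hv : volume F < ρ F := (measure_mono hFA).trans_lt hFlt
    have hv' : (volume : Measure Circle').real F < ρ.real F :=
      (ENNReal.toReal_lt_toReal (measure_ne_top _ _) (measure_ne_top _ _)).2 hv
    have hδ : ∀ n : ℕ, (0:ℝ) < 1 / ((n:ℝ) + 1) := fun n => by positivity
    have hlim := tendsto_integral_thickenedIndicator_of_isClosed (volume : Measure Circle') hF hδ
      tendsto_one_div_add_atTop_nhds_zero_nat
    obtain ⟨n, hn⟩ := (hlim.eventually (gt_mem_nhds hv')).exists
    refine ⟨⟨fun u => (thickenedIndicator (hδ n) F u : ℝ), by fun_prop⟩, fun u => by simp, ?_⟩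
    refine lt_of_lt_of_le hn ?_
    have : ρ.real F = ∫ u, F.indicator 1 u ∂ρ := by
      rw [integral_indicator_one hF.measurableSet]
    rw [this]
    refine integral_mono ?_ (integrable_cm ⟨fun u => (thickenedIndicator (hδ n) F u : ℝ), by fun_prop⟩ ρ) ?_
    · exact (integrable_const (1:ℝ)).indicator hF.measurableSet
    · intro u
      by_cases hu : u ∈ F
      · have e := thickenedIndicator_one (hδ n) F hu
        show F.indicator 1 u ≤ ((thickenedIndicator (hδ n) F u : ℝ≥0) : ℝ)
        rw [e, indicator_of_mem hu]; simp
      · simp [hu]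
  set d := ∫ u, g u ∂ρ - ∫ u, g u with hd
  have hdpos : 0 < d := by linarith
  set t := (|α| + 1) / d with ht
  have htpos : 0 < t := by positivity
  refine ⟨t • g, ?_⟩
  have h1 : ∫ u, lam m ((t • g) u) ≤ ∫ u, t * g u := by
    refine integral_mono ?_ ?_ ?_
    · exact integrable_cm ⟨fun u => lam m ((t • g) u), (continuous_lam hm0 hm1).comp (t • g).continuous⟩ volume
    · exact (integrable_cm g volume).const_mul t
    · intro u
      exact lam_le hm0 hm1 (mul_nonneg htpos.le (hg0 u))
  have h2 : ∫ u, (t • g) u ∂ρ = t * ∫ u, g u ∂ρ := by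
    rw [← integral_const_mul]; rfl
  rw [integral_const_mul] at h1
  rw [h2]
  have h3 : t * d = |α| + 1 := by rw [ht]; field_simp
  have h4 := le_abs_self α
  nlinarith

lemma dual_ac {m : ℝ} (hm0 : 0 < m) (hm1 : m < 1) (ρ : Measure Circle') [IsFiniteMeasure ρ]
    (hac : ρ ≪ volume) (h1 : ∀ᵐ u ∂(volume : Measure Circle'), (ρ.rnDeriv volume u).toReal ≤ 1)
    (α : ℝ) (hα : α < ∫ u, hFun m ((ρ.rnDeriv volume u).toReal)) :
    ∃ φ : C(Circle', ℝ), (∫ u, lam m (φ u)) - ∫ u, φ u ∂ρ < -α := by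
  set f : Circle' → ℝ := fun u => min (ρ.rnDeriv volume u).toReal 1 with hf
  have hfm : Measurable f := (Measure.measurable_rnDeriv _ _).ennreal_toReal.min measurable_const
  have hf0 : ∀ u, 0 ≤ f u := fun u => le_min ENNReal.toReal_nonneg zero_le_one
  have hf1 : ∀ u, f u ≤ 1 := fun u => min_le_right _ _
  have hfe : ∀ᵐ u ∂(volume : Measure Circle'), (ρ.rnDeriv volume u).toReal = f u := by
    filter_upwards [h1] with u hu
    exact (min_eq_left hu).symm
  have hrep : ∀ φ : C(Circle', ℝ), ∫ u, φ u ∂ρ = ∫ u, f u * φ u := by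
    intro φ
    rw [← integral_rnDeriv_smul hac]
    refine integral_congr_ae ?_
    filter_upwards [hfe] with u hu
    rw [hu, smul_eq_mul]
  have hI : ∫ u, hFun m ((ρ.rnDeriv volume u).toReal) = ∫ u, hFun m (f u) := by
    refine integral_congr_ae ?_
    filter_upwards [hfe] with u hu
    rw [hu]
  rw [hI] at hα
  have hcomp : ∀ G : ℝ → ℝ, Measurable G → ContinuousOn G (Icc 0 1) →
      Integrable (fun u => G (f u)) (volume : Measure Circle') := by
    intro G hG hGc
    obtain ⟨C, hC⟩ := isCompact_Icc.exists_bound_of_continuousOn hGc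
    exact Integrable.of_bound (hG.comp hfm).aestronglyMeasurable C
      (Eventually.of_forall fun u => hC _ ⟨hf0 u, hf1 u⟩)
  set I := ∫ u, hFun m (f u) with hIdef
  -- choose the smoothing parameter
  set η := (I - α) / 4 with hη
  have hηp : 0 < η := by rw [hη]; linarith
  set δ := 1 - Real.exp (-η) with hδ
  have hδ0 : 0 < δ := by
    have : Real.exp (-η) < 1 := by
      rw [← Real.exp_zero]; exact Real.exp_lt_exp.2 (by linarith)
    linarith
  have hδ1 : 0 < 1 - δ := by rw [hδ]; linarith [Real.exp_pos (-η)]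
  have hlogδ : Real.log (1 - δ) = -η := by rw [hδ, sub_sub_cancel, Real.log_exp]
  set w : ℝ → ℝ := fun x => (1 - δ) * x + δ * m with hw
  have hw0 : ∀ x ∈ Icc (0:ℝ) 1, 0 < w x := fun x hx => by
    have a := mul_nonneg hδ1.le hx.1
    have b := mul_pos hδ0 hm0
    simp only [hw]; linarith
  have hw1 : ∀ x ∈ Icc (0:ℝ) 1, 0 < 1 - w x := fun x hx => by
    have a := mul_nonneg hδ1.le (sub_nonneg.2 hx.2)
    have b := mul_pos hδ0 (sub_pos.2 hm1)
    simp only [hw]; nlinarith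
  have h1m : 0 < 1 - m := by linarith
  set G : ℝ → ℝ := fun x => Real.log (w x / m) - Real.log ((1 - w x) / (1 - m)) with hG
  have hwc : Continuous w := by simp only [hw]; fun_prop
  have hGm : Measurable G := by
    have := hwc.measurable
    simp only [hG]
    fun_prop
  have hGc : ContinuousOn G (Icc 0 1) := by
    refine ContinuousOn.sub ?_ ?_
    · exact ContinuousOn.log (by fun_prop) fun x hx => (div_pos (hw0 x hx) hm0).ne'
    · exact ContinuousOn.log (by fun_prop) fun x hx => (div_pos (hw1 x hx) h1m).ne'
  have hlamG : ∀ x ∈ Icc (0:ℝ) 1, lam m (G x) = - Real.log ((1 - w x) / (1 - m)) := by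
    intro x hx
    have a := hw0 x hx
    have b := hw1 x hx
    have : 1 - m + m * Real.exp (G x) = ((1 - w x) / (1 - m))⁻¹ := by
      simp only [hG]
      rw [Real.exp_sub, Real.exp_log (by positivity), Real.exp_log (by positivity)]
      field_simp
      ring
    rw [lam, this, Real.log_inv]
  have hpt : ∀ x ∈ Icc (0:ℝ) 1, lam m (G x) - x * G x ≤ - hFun m x + η := by
    intro x hx
    rw [hlamG x hx]
    have e1 : x * Real.log (x / m) + x * Real.log (1 - δ) ≤ x * Real.log (w x / m) := by
      rcases hx.1.eq_or_lt with h | h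
      · simp [← h]
      rw [← mul_add, ← Real.log_mul (by positivity) hδ1.ne']
      refine mul_le_mul_of_nonneg_left (Real.log_le_log (by positivity) ?_) h.le
      rw [div_mul_eq_mul_div]
      refine div_le_div_of_nonneg_right ?_ hm0.le
      simp only [hw]; nlinarith [mul_pos hδ0 hm0]
    have e2 : (1-x) * Real.log ((1-x) / (1-m)) + (1-x) * Real.log (1 - δ) ≤
        (1-x) * Real.log ((1 - w x) / (1-m)) := by
      rcases hx.2.eq_or_lt with h | h
      · simp [h]
      have hx' : 0 < 1 - x := by linarith
      rw [← mul_add, ← Real.log_mul (by positivity) hδ1.ne']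
      refine mul_le_mul_of_nonneg_left (Real.log_le_log (by positivity) ?_) hx'.le
      rw [div_mul_eq_mul_div]
      refine div_le_div_of_nonneg_right ?_ h1m.le
      simp only [hw]; nlinarith [mul_pos hδ0 h1m]
    rw [hlogδ] at e1 e2
    simp only [hG, hFun]
    linarith
  obtain ⟨ψ, hψ, hψi⟩ := (hcomp G hGm hGc).exists_boundedContinuous_integral_sub_le hηp
  refine ⟨ψ.toContinuousMap, ?_⟩
  rw [hrep]
  change (∫ u, lam m (ψ u)) - ∫ u, f u * ψ u < -α
  have i1 : Integrable (fun u => lam m (ψ u)) (volume : Measure Circle') :=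
    integrable_cm ⟨fun u => lam m (ψ u), (continuous_lam hm0 hm1).comp ψ.continuous⟩ volume
  have i2 : Integrable (fun u => f u * ψ u) (volume : Measure Circle') := by
    refine hψi.bdd_mul hfm.aestronglyMeasurable (c := 1) (Eventually.of_forall fun u => ?_)
    rw [Real.norm_eq_abs, abs_of_nonneg (hf0 u)]; exact hf1 u
  have i3 : Integrable (fun u => hFun m (f u)) (volume : Measure Circle') :=
    hcomp _ (continuous_hFun hm0 hm1).measurable (continuous_hFun hm0 hm1).continuousOn
  have i4 : Integrable (fun u => ‖G (f u) - ψ u‖) (volume : Measure Circle') :=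
    ((hcomp G hGm hGc).sub hψi).norm
  have hineq : ∫ u, (lam m (ψ u) - f u * ψ u) ≤
      ∫ u, ((- hFun m (f u) + η) + 2 * ‖G (f u) - ψ u‖) := by
    refine integral_mono (i1.sub i2) ((i3.neg.add (integrable_const _)).add (i4.const_mul 2)) ?_
    intro u
    have a := hpt (f u) ⟨hf0 u, hf1 u⟩
    have b := lam_lip hm0 hm1 (ψ u) (G (f u))
    rw [abs_sub_comm] at b
    have c : f u * (G (f u) - ψ u) ≤ |G (f u) - ψ u| := by
      calc _ ≤ f u * |G (f u) - ψ u| := mul_le_mul_of_nonneg_left (le_abs_self _) (hf0 u)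
        _ ≤ _ := mul_le_of_le_one_left (abs_nonneg _) (hf1 u)
    simp only [Real.norm_eq_abs]
    linarith
  have i5 : Integrable (fun u => -hFun m (f u)) (volume : Measure Circle') := i3.neg
  have i6 : Integrable (fun u => -hFun m (f u) + η) (volume : Measure Circle') :=
    i5.add (integrable_const _)
  rw [integral_sub i1 i2, integral_add i6 (i4.const_mul 2),
    integral_const_mul, integral_add i5 (integrable_const _), integral_neg] at hineq
  simp only [integral_const, smul_eq_mul] at hineq
  have hu : (volume : Measure Circle').real univ = 1 := by simp [Measure.real]
  rw [hu, one_mul] at hineq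
  have : I = α + 4 * η := by rw [hη]; ring
  linarith



/-! ### Upper bound -/

lemma prob_mono' {m : ℝ} {N : ℕ} (hN : 0 < N) {C D : Set (FiniteMeasure Circle')}
    (h : ∀ S : Finset (ZMod N), S.card = ⌊(N : ℝ) * m⌋₊ → empTASEP N S ∈ C → empTASEP N S ∈ D) :
    probTASEP m N C ≤ probTASEP m N D := by
  have : NeZero N := ⟨hN.ne'⟩
  unfold probTASEP
  apply ENNReal.div_le_div_right
  have := Set.ncard_le_ncard (s := {S : Finset (ZMod N) | S.card = ⌊(N : ℝ) * m⌋₊ ∧ empTASEP N S ∈ C})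
    (t := {S : Finset (ZMod N) | S.card = ⌊(N : ℝ) * m⌋₊ ∧ empTASEP N S ∈ D})
    (fun S hS => ⟨hS.1, h S hS.1 hS.2⟩) (Set.toFinite _)
  exact_mod_cast this

lemma prob_union {m : ℝ} (N : ℕ) (C D : Set (FiniteMeasure Circle')) :
    probTASEP m N (C ∪ D) ≤ probTASEP m N C + probTASEP m N D := by
  unfold probTASEP
  rw [← ENNReal.add_div]
  gcongr
  have e : {S : Finset (ZMod N) | S.card = ⌊(N : ℝ) * m⌋₊ ∧ empTASEP N S ∈ C ∪ D} =
    {S : Finset (ZMod N) | S.card = ⌊(N : ℝ) * m⌋₊ ∧ empTASEP N S ∈ C} ∪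
    {S : Finset (ZMod N) | S.card = ⌊(N : ℝ) * m⌋₊ ∧ empTASEP N S ∈ D} := by
    ext S
    simp only [mem_ofPred_eq, mem_union]
    tauto
  rw [e]
  exact_mod_cast Set.ncard_union_le _ _

lemma prob_le_one {m : ℝ} {N : ℕ} (hN : 0 < N) (C : Set (FiniteMeasure Circle')) :
    probTASEP m N C ≤ 1 := by
  have : NeZero N := ⟨hN.ne'⟩
  unfold probTASEP
  apply ENNReal.div_le_of_le_mul
  rw [one_mul]
  have : {S : Finset (ZMod N) | S.card = ⌊(N : ℝ) * m⌋₊ ∧ empTASEP N S ∈ C} ⊆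
    ((Finset.powersetCard ⌊(N : ℝ) * m⌋₊ (Finset.univ : Finset (ZMod N)) : Finset _) : Set _) := by
    intro S hS
    simp [hS.1]
  have h := Set.ncard_le_ncard this (Finset.finite_toSet _)
  rw [Set.ncard_coe_finset, Finset.card_powersetCard, Finset.card_univ, ZMod.card] at h
  exact_mod_cast h

lemma local_nbhd {m : ℝ} (hm0 : 0 < m) (hm1 : m < 1) (ρ : FiniteMeasure Circle') (α : ℝ)
    (h : (α : EReal) < (rateTASEP m ρ : EReal)) :
    ∃ U : Set (FiniteMeasure Circle'), IsOpen U ∧ ρ ∈ U ∧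
      ∀ᶠ N : ℕ in atTop, probTASEP m N U ≤ ENNReal.ofReal (Real.exp (-(N * α))) := by
  have key : (∃ φ : C(Circle', ℝ), (∫ u, lam m (φ u)) - ∫ u, φ u ∂(ρ : Measure Circle') < -α) →
      ∃ U : Set (FiniteMeasure Circle'), IsOpen U ∧ ρ ∈ U ∧
      ∀ᶠ N : ℕ in atTop, probTASEP m N U ≤ ENNReal.ofReal (Real.exp (-(N * α))) := by
    rintro ⟨φ, hφ⟩
    obtain ⟨a, ha1, ha2⟩ := exists_between
      (show (∫ u, lam m (φ u)) + α < ∫ u, φ u ∂(ρ : Measure Circle') by linarith)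
    refine ⟨{μ : FiniteMeasure Circle' | a < ∫ u, φ u ∂(μ : Measure Circle')}, ?_, ha2, ?_⟩
    · refine isOpen_lt continuous_const ?_
      exact FiniteMeasure.continuous_integral_boundedContinuousFunction
        (BoundedContinuousFunction.mkOfCompact φ)
    · apply halfspace_bound hm0 hm1
      unfold lam at ha1
      linarith
  by_cases hα : α < 0
  · refine ⟨univ, isOpen_univ, mem_univ _, ?_⟩
    filter_upwards [eventually_gt_atTop 0] with N hN
    refine (prob_le_one hN _).trans ?_
    rw [← ENNReal.ofReal_one]
    apply ENNReal.ofReal_le_ofReal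
    rw [Real.one_le_exp_iff]
    have : (0:ℝ) < N := by exact_mod_cast hN
    nlinarith
  push Not at hα
  by_cases hmass : (ρ : Measure Circle') univ = ENNReal.ofReal m
  swap
  · have hne : ((ρ.mass : ℝ≥0) : ℝ) ≠ m := by
      intro e
      apply hmass
      rw [← e, ENNReal.ofReal_coe_nnreal, FiniteMeasure.ennreal_mass]
    have hd : 0 < |(ρ.mass : ℝ) - m| := abs_pos.2 (sub_ne_zero.2 hne)
    refine ⟨{μ | |(ρ.mass : ℝ) - m| / 2 < |(μ.mass : ℝ) - m|}, ?_, ?_, ?_⟩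
    · refine isOpen_lt continuous_const ?_
      have := FiniteMeasure.continuous_mass (Ω := Circle')
      fun_prop
    · simp only [mem_ofPred_eq]; linarith
    · have := (floor_div_tendsto hm0).eventually (Metric.ball_mem_nhds m (half_pos hd))
      filter_upwards [this, eventually_gt_atTop 0] with N hN hN0
      have z : probTASEP m N {μ | |(ρ.mass : ℝ) - m| / 2 < |(μ.mass : ℝ) - m|} ≤
          probTASEP m N ∅ := by
        apply prob_mono' hN0
        intro S hS hS'
        exfalso
        have e : ((empTASEP N S).mass : ℝ) = (S.card : ℝ) / N := by
          rw [← emp_real_univ]; rfl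
        simp only [mem_ofPred_eq] at hS'
        rw [e, hS] at hS'
        rw [Real.dist_eq] at hN
        linarith
      refine z.trans ?_
      simp [probTASEP]
  by_cases hle : (ρ : Measure Circle') ≤ volume
  swap
  · exact key (dual_sing hm0 hm1 _ hle α)
  have hac := Measure.absolutelyContinuous_of_le hle
  have h1 : ∀ᵐ u ∂(volume : Measure Circle'),
      (((ρ : Measure Circle').rnDeriv volume u)).toReal ≤ 1 := by
    filter_upwards [Measure.rnDeriv_le_one_of_le hle] with u hu
    exact ENNReal.toReal_le_of_le_ofReal zero_le_one (by simpa using hu)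
  apply key
  apply dual_ac hm0 hm1 _ hac h1
  rw [rateTASEP, if_pos ⟨hac, h1, hmass⟩] at h
  by_contra hcon
  push Not at hcon
  refine absurd h (not_lt.2 ?_)
  rw [EReal.coe_ennreal_ofReal]
  exact_mod_cast max_le hcon hα

lemma upper_aux {m : ℝ} (hm0 : 0 < m) (hm1 : m < 1) (C : Set (FiniteMeasure Circle'))
    (hC : IsClosed C) (α : ℝ) (h : ∀ ρ ∈ C, (α : EReal) < (rateTASEP m ρ : EReal)) :
    ∃ n : ℕ, ∀ᶠ N : ℕ in atTop, probTASEP m N C ≤ n * ENNReal.ofReal (Real.exp (-(N * α))) := by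
  have hK : IsCompact (C ∩ {μ : FiniteMeasure Circle' | μ.mass ≤ 1}) :=
    (isCompact_setOfPred_finiteMeasure_le_of_compactSpace Circle' 1).inter_left hC
  have main := hK.induction_on
    (p := fun s => ∃ n : ℕ, ∀ᶠ N : ℕ in atTop,
      probTASEP m N s ≤ n * ENNReal.ofReal (Real.exp (-(N * α))))
    ⟨0, by simp [probTASEP]⟩
    (by
      rintro s t hst ⟨n, hn⟩
      refine ⟨n, ?_⟩
      filter_upwards [hn, eventually_gt_atTop 0] with N hN hN0
      exact (prob_mono' hN0 fun S _ hS => hst hS).trans hN)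
    (by
      rintro s t ⟨n, hn⟩ ⟨k, hk⟩
      refine ⟨n + k, ?_⟩
      filter_upwards [hn, hk] with N h1 h2
      refine (prob_union N s t).trans ((add_le_add h1 h2).trans ?_)
      push_cast
      rw [add_mul])
    (by
      intro ρ hρ
      obtain ⟨U, hU, hρU, hN⟩ := local_nbhd hm0 hm1 ρ α (h ρ hρ.1)
      exact ⟨U, mem_nhdsWithin_of_mem_nhds (hU.mem_nhds hρU), 1, by simpa using hN⟩)
  obtain ⟨n, hn⟩ := main
  refine ⟨n, ?_⟩
  filter_upwards [hn, eventually_gt_atTop 0] with N hN hN0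
  refine le_trans (prob_mono' hN0 ?_) hN
  intro S _ hS
  refine ⟨hS, ?_⟩
  have := emp_real_le_one hN0 S
  have e : ((empTASEP N S).mass : ℝ) = (empTASEP N S : Measure Circle').real univ := rfl
  rw [← e] at this
  exact_mod_cast this

lemma upper_bound {m : ℝ} (hm0 : 0 < m) (hm1 : m < 1) (C : Set (FiniteMeasure Circle'))
    (hC : IsClosed C) :
    Filter.limsup
        (fun N : ℕ => (((N : ℝ)⁻¹ : ℝ) : EReal) * ENNReal.log (probTASEP m N C))
        Filter.atTop
        ≤ - ⨅ ρ ∈ C, (rateTASEP m ρ : EReal) := by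
  rw [EReal.le_neg]
  refine EReal.ge_of_forall_gt_iff_ge.1 ?_
  intro α hα
  rw [EReal.le_neg]
  obtain ⟨n, hn⟩ := upper_aux hm0 hm1 C hC α
    (fun ρ hρ => hα.trans_le (iInf₂_le (f := fun ρ (_ : ρ ∈ C) => (rateTASEP m ρ : EReal)) ρ hρ))
  have hlim : Tendsto (fun N : ℕ => (((Real.log (n + 1)) * (N:ℝ)⁻¹ - α : ℝ) : EReal)) atTop
      (𝓝 ((-α : ℝ) : EReal)) := by
    refine (continuous_coe_real_ereal.tendsto _).comp ?_
    have := (tendsto_inv_atTop_nhds_zero_nat (𝕜 := ℝ)).const_mul (Real.log (n + 1))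
    simpa using this.sub_const α
  rw [← EReal.coe_neg, ← hlim.limsup_eq]
  refine limsup_le_limsup ?_
  filter_upwards [hn, eventually_gt_atTop 0] with N hN hN0
  have hNr : (0:ℝ) < N := by exact_mod_cast hN0
  have h1 : probTASEP m N C ≤ ENNReal.ofReal ((n + 1) * Real.exp (-(N * α))) := by
    refine hN.trans ?_
    rw [ENNReal.ofReal_mul (by positivity)]
    gcongr
    rw [← ENNReal.ofReal_natCast]
    exact ENNReal.ofReal_le_ofReal (by linarith)
  have h2 := ENNReal.log_monotone h1
  rw [ENNReal.log_ofReal_of_pos (by positivity), Real.log_mul (by positivity) (by positivity),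
    Real.log_exp] at h2
  refine (mul_le_mul_of_nonneg_left h2 (by exact_mod_cast (inv_pos.2 hNr).le)).trans ?_
  rw [← EReal.coe_mul]
  apply le_of_eq
  congr 1
  field_simp
  ring


/-! ### Lower bound -/

/-- Distribution function of a measure on the circle. -/
def cdfR (ρ : Measure Circle') (t : ℝ) : ℝ := ρ.real (arc 0 t)

lemma cdfR_sub (ρ : Measure Circle') [IsFiniteMeasure ρ] {s t : ℝ} (hs : 0 ≤ s) (hst : s ≤ t) :
    cdfR ρ t - cdfR ρ s = ρ.real (arc s t) := by
  have e : arc 0 t = arc 0 s ∪ arc s t := by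
    simp only [arc]
    rw [← preimage_union, Ico_union_Ico_eq_Ico hs hst]
  have d : Disjoint (arc 0 s) (arc s t) := by
    apply Disjoint.preimage
    rw [Set.disjoint_left]
    intro x hx hx'
    exact absurd hx.2 (not_lt.2 hx'.1)
  rw [cdfR, cdfR, e, measureReal_union d (measurableSet_arc _ _)]
  ring

lemma real_arc_le (ρ : Measure Circle') [IsFiniteMeasure ρ] (hle : ρ ≤ volume) {s t : ℝ}
    (hs : 0 ≤ s) (hst : s ≤ t) (ht : t ≤ 1) : ρ.real (arc s t) ≤ t - s := by
  rw [Measure.real]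
  apply ENNReal.toReal_le_of_le_ofReal (by linarith)
  rw [← volume_arc hs ht]
  exact hle _

lemma cdfR_zero (ρ : Measure Circle') : cdfR ρ 0 = 0 := by
  simp [cdfR, arc]

lemma cdfR_one (ρ : Measure Circle') : cdfR ρ 1 = ρ.real univ := by
  rw [cdfR]
  congr 1
  ext u
  simpa [arc] using tau_mem u

/-- Rounded cumulative particle counts. -/
def bcnt (ρ : Measure Circle') (N k j : ℕ) : ℕ := ⌊(N:ℝ) * cdfR ρ ((pt N k j : ℝ) / N)⌋₊

/-- Particle count in the `j`-th cell. -/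
def ncnt (ρ : Measure Circle') (N k j : ℕ) : ℕ := bcnt ρ N k (j+1) - bcnt ρ N k j

lemma bcnt_mono (ρ : Measure Circle') [IsFiniteMeasure ρ] (N k : ℕ) : Monotone (bcnt ρ N k) := by
  intro i j hij
  apply Nat.floor_mono
  apply mul_le_mul_of_nonneg_left _ (Nat.cast_nonneg N)
  have := cdfR_sub ρ (s := (pt N k i : ℝ) / N) (by positivity) (cell_mono N k hij)
  have h2 : 0 ≤ ρ.real (arc ((pt N k i : ℝ) / N) ((pt N k j : ℝ) / N)) := measureReal_nonneg
  simp only at this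
  linarith

lemma ncnt_le (ρ : Measure Circle') [IsFiniteMeasure ρ] (hle : ρ ≤ volume) (N : ℕ) {k j : ℕ}
    (hj : j < k) : ncnt ρ N k j ≤ pt N k (j+1) - pt N k j := by
  rcases Nat.eq_zero_or_pos N with rfl | hN
  · simp [ncnt, bcnt]
  have hN' : (0:ℝ) < N := by exact_mod_cast hN
  have hk : 0 < k := by omega
  have h1 := cdfR_sub ρ (s := (pt N k j : ℝ) / N) (by positivity) (cell_mono N k (Nat.le_succ j))
  have h2 := real_arc_le ρ hle (s := (pt N k j : ℝ) / N) (by positivity)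
    (cell_mono N k (Nat.le_succ j)) (by
      simp only
      rw [div_le_one hN']; exact_mod_cast pt_le N hj hk)
  simp only [Nat.succ_eq_add_one] at h1 h2
  have hm := pt_mono N k (Nat.le_succ j)
  rw [ncnt, Nat.sub_le_iff_le_add]
  unfold bcnt
  have h0 : 0 ≤ (N:ℝ) * cdfR ρ ((pt N k j : ℝ) / N) := mul_nonneg hN'.le measureReal_nonneg
  rw [add_comm (pt N k (j+1) - pt N k j), ← Nat.floor_add_natCast h0]
  apply Nat.floor_mono
  rw [Nat.cast_sub hm]
  have h3 : cdfR ρ ((pt N k (j+1) : ℝ) / N) ≤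
    cdfR ρ ((pt N k j : ℝ) / N) + ((pt N k (j+1) : ℝ) / N - (pt N k j : ℝ) / N) := by linarith
  have h4 := mul_le_mul_of_nonneg_left h3 hN'.le
  refine h4.trans (le_of_eq ?_)
  field_simp

lemma sum_ncnt (ρ : Measure Circle') [IsFiniteMeasure ρ] {m : ℝ} (hρ : ρ.real univ = m)
    {N k : ℕ} (hN : 0 < N) (hk : 0 < k) : ∑ j : Fin k, ncnt ρ N k j = ⌊(N:ℝ) * m⌋₊ := by
  have hN' : (N:ℝ) ≠ 0 := by positivity
  rw [Fin.sum_univ_eq_sum_range (fun j => ncnt ρ N k j) k]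
  unfold ncnt
  rw [Finset.sum_range_tsub (bcnt_mono ρ N k)]
  simp [bcnt, pt_zero, pt_last N hk, cdfR_zero, div_self hN', cdfR_one, hρ]

lemma ncnt_close (ρ : Measure Circle') [IsFiniteMeasure ρ] {N k : ℕ} (hN : 0 < N) (j : Fin k) :
    |(ncnt ρ N k j : ℝ) / N - ρ.real (cell N k j)| ≤ 1 / N := by
  have hN' : (0:ℝ) < N := by exact_mod_cast hN
  have h1 := cdfR_sub ρ (s := (pt N k j : ℝ) / N) (by positivity) (cell_mono N k (Nat.le_succ (j:ℕ)))
  simp only [Nat.succ_eq_add_one] at h1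
  rw [cell, ← h1, ncnt, Nat.cast_sub (bcnt_mono ρ N k (Nat.le_succ _)), abs_le]
  have a0 : ∀ i, 0 ≤ (N:ℝ) * cdfR ρ ((pt N k i : ℝ) / N) := fun i =>
    mul_nonneg hN'.le measureReal_nonneg
  have f1 : ∀ i, (bcnt ρ N k i : ℝ) ≤ (N:ℝ) * cdfR ρ ((pt N k i : ℝ) / N) := fun i =>
    Nat.floor_le (a0 i)
  have f2 : ∀ i, (N:ℝ) * cdfR ρ ((pt N k i : ℝ) / N) < bcnt ρ N k i + 1 := fun i =>
    Nat.lt_floor_add_one _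
  have e1 := f1 j
  have e2 := f1 (j+1)
  have e3 := f2 j
  have e4 := f2 (j+1)
  constructor
  · rw [← sub_nonneg]
    have : 0 ≤ (((bcnt ρ N k (j+1) : ℝ) - bcnt ρ N k j) - (N:ℝ) * cdfR ρ ((pt N k (j+1) : ℝ) / N)
      + (N:ℝ) * cdfR ρ ((pt N k j : ℝ) / N) + 1) / N := div_nonneg (by linarith) hN'.le
    refine this.trans (le_of_eq ?_)
    field_simp
    ring
  · rw [← sub_nonneg]
    have : 0 ≤ (1 - (((bcnt ρ N k (j+1) : ℝ) - bcnt ρ N k j) -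
      (N:ℝ) * cdfR ρ ((pt N k (j+1) : ℝ) / N)
      + (N:ℝ) * cdfR ρ ((pt N k j : ℝ) / N))) / N := div_nonneg (by linarith) hN'.le
    refine this.trans (le_of_eq ?_)
    field_simp
    ring

lemma pt_div_tendsto {k : ℕ} (hk : 0 < k) (j : ℕ) :
    Tendsto (fun N : ℕ => (pt N k j : ℝ) / N) atTop (𝓝 ((j:ℝ) / k)) := by
  refine tendsto_of_tendsto_of_tendsto_of_le_of_le'
    (g := fun N : ℕ => (j:ℝ) / k - (N:ℝ)⁻¹) (h := fun _ => (j:ℝ) / k) ?_ tendsto_const_nhds ?_ ?_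
  · simpa using (tendsto_inv_atTop_nhds_zero_nat (𝕜 := ℝ)).const_sub ((j:ℝ) / k)
  · filter_upwards [eventually_gt_atTop 0] with N hN
    have hN' : (0:ℝ) < N := by exact_mod_cast hN
    have := lt_pt_real N k j hk
    rw [le_div_iff₀ hN', sub_mul, inv_mul_cancel₀ hN'.ne']
    linarith
  · filter_upwards [eventually_gt_atTop 0] with N hN
    have hN' : (0:ℝ) < N := by exact_mod_cast hN
    have := pt_le_real N k j hk
    rw [div_le_iff₀ hN']
    linarith

lemma bcnt_div_tendsto (ρ : Measure Circle') [IsFiniteMeasure ρ] (hle : ρ ≤ volume)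
    {k : ℕ} (hk : 0 < k) {j : ℕ} (hj : j ≤ k) :
    Tendsto (fun N : ℕ => (bcnt ρ N k j : ℝ) / N) atTop (𝓝 (cdfR ρ ((j:ℝ) / k))) := by
  have hk' : (0:ℝ) < k := by exact_mod_cast hk
  refine tendsto_of_tendsto_of_tendsto_of_le_of_le'
    (g := fun N : ℕ => cdfR ρ ((j:ℝ) / k) - 2 * (N:ℝ)⁻¹) (h := fun _ => cdfR ρ ((j:ℝ) / k))
    ?_ tendsto_const_nhds ?_ ?_
  · simpa using ((tendsto_inv_atTop_nhds_zero_nat (𝕜 := ℝ)).const_mul 2).const_sub (cdfR ρ ((j:ℝ) / k))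
  all_goals
    filter_upwards [eventually_gt_atTop 0] with N hN
    have hN' : (0:ℝ) < N := by exact_mod_cast hN
    have h1 := lt_pt_real N k j hk
    have h2 := pt_le_real N k j hk
    have hs : (pt N k j : ℝ) / N ≤ (j:ℝ) / k := by
      rw [div_le_iff₀ hN']; linarith
    have h3 := cdfR_sub ρ (s := (pt N k j : ℝ) / N) (by positivity) hs
    have h4 := real_arc_le ρ hle (s := (pt N k j : ℝ) / N) (by positivity) hs
      (by rw [div_le_one hk']; exact_mod_cast hj)
    have h5 : 0 ≤ ρ.real (arc ((pt N k j : ℝ) / N) ((j:ℝ) / k)) := measureReal_nonneg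
    have h0 : 0 ≤ (N:ℝ) * cdfR ρ ((pt N k j : ℝ) / N) := mul_nonneg hN'.le measureReal_nonneg
    have f1 : (bcnt ρ N k j : ℝ) ≤ _ := Nat.floor_le h0
    have f2 : _ < (bcnt ρ N k j : ℝ) + 1 := Nat.lt_floor_add_one ((N:ℝ) * cdfR ρ ((pt N k j : ℝ) / N))
  · rw [le_div_iff₀ hN', sub_mul, mul_assoc, inv_mul_cancel₀ hN'.ne']
    have h6 := mul_le_mul_of_nonneg_left (h3.le.trans h4) hN'.le
    have h7 : (N:ℝ) * ((j:ℝ) / k - (pt N k j : ℝ) / N) = N * (j / k) - pt N k j := by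
      field_simp
    rw [h7] at h6
    linarith
  · rw [div_le_iff₀ hN']
    nlinarith


lemma sites_disjoint {N k : ℕ} [NeZero N] {i j : Fin k} (hij : i ≠ j) :
    Disjoint (sites N k i) (sites N k j) := by
  have key : ∀ i j : Fin k, i < j → Disjoint (sites N k i) (sites N k j) := by
    intro i j h
    rw [Finset.disjoint_left]
    intro x hx hx'
    simp only [sites, Finset.mem_filter, Finset.mem_univ, true_and] at hx hx'
    have := pt_mono N k (show (i:ℕ) + 1 ≤ j from h)
    omega
  rcases lt_or_gt_of_ne hij with h | h
  · exact key i j h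
  · exact (key j i h).symm

lemma count_lower {N k : ℕ} [NeZero N] (n : Fin k → ℕ) (P : Set (Finset (ZMod N)))
    (hP : ∀ S : Finset (ZMod N), S.card = ∑ j, n j → (∀ j, (S ∩ sites N k j).card = n j) → S ∈ P) :
    ∏ j : Fin k, (pt N k (j+1) - pt N k j).choose (n j) ≤ P.ncard := by
  classical
  set G := Fintype.piFinset (fun j => Finset.powersetCard (n j) (sites N k j)) with hG
  have hcard : G.card = ∏ j : Fin k, (pt N k (j+1) - pt N k j).choose (n j) := by
    rw [hG, Fintype.card_piFinset]
    simp only [Finset.card_powersetCard, card_sites]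
  have hmem : ∀ g ∈ G, ∀ j, g j ⊆ sites N k j ∧ (g j).card = n j := by
    intro g hg j
    rw [hG, Fintype.mem_piFinset] at hg
    exact Finset.mem_powersetCard.1 (hg j)
  have hint : ∀ g ∈ G, ∀ j, Finset.univ.biUnion g ∩ sites N k j = g j := by
    intro g hg j
    ext x
    simp only [Finset.mem_inter, Finset.mem_biUnion, Finset.mem_univ, true_and]
    constructor
    · rintro ⟨⟨i, hi⟩, hx⟩
      by_cases hij : i = j
      · exact hij ▸ hi
      · exact absurd hx (Finset.disjoint_left.1 (sites_disjoint hij) ((hmem g hg i).1 hi))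
    · intro hx
      exact ⟨⟨j, hx⟩, (hmem g hg j).1 hx⟩
  rw [← hcard, ← Set.ncard_coe_finset]
  refine Set.ncard_le_ncard_of_injOn (fun g => Finset.univ.biUnion g) ?_ ?_ (Set.toFinite _)
  · intro g hg
    have hg' : g ∈ G := by simpa using hg
    apply hP
    · rw [Finset.card_biUnion]
      · exact Finset.sum_congr rfl fun j _ => (hmem g hg' j).2
      · intro i _ j _ hij
        exact (sites_disjoint hij).mono (hmem g hg' i).1 (hmem g hg' j).1
    · intro j
      rw [hint g hg' j, (hmem g hg' j).2]
  · intro g hg g' hg' h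
    have hg1 : g ∈ G := by simpa using hg
    have hg2 : g' ∈ G := by simpa using hg'
    funext j
    rw [← hint g hg1 j, ← hint g' hg2 j]
    simp only at h
    rw [h]

lemma membership (ρ : FiniteMeasure Circle') (hle : (ρ : Measure Circle') ≤ volume)
    (O : Set (FiniteMeasure Circle')) (hO : IsOpen O) (hρ : ρ ∈ O) :
    ∃ k : ℕ, 0 < k ∧ ∀ᶠ N : ℕ in atTop, ∀ [NeZero N], ∀ S : Finset (ZMod N),
      (∀ j : Fin k, (S ∩ sites N k j).card = ncnt ρ N k j) → empTASEP N S ∈ O := by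
  by_contra hcon
  push Not at hcon
  have h : ∀ k : ℕ, ∃ N : ℕ, (k+1)^2 ≤ N ∧ ∃ (_ : NeZero N) (S : Finset (ZMod N)),
      (∀ j : Fin (k+1), (S ∩ sites N (k+1) j).card = ncnt ρ N (k+1) j) ∧ empTASEP N S ∉ O := by
    intro k
    obtain ⟨N, hN, h1, S, h2⟩ := (frequently_atTop.1 (hcon (k+1) (Nat.succ_pos k))) ((k+1)^2)
    exact ⟨N, hN, h1, S, h2⟩
  choose N hN hz S hS hSO using h
  have hρ1 : (ρ : Measure Circle').real univ ≤ 1 := by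
    rw [Measure.real]
    apply ENNReal.toReal_le_of_le_ofReal zero_le_one
    refine (hle univ).trans ?_
    simp
  have hNpos : ∀ k, 0 < N k := fun k => lt_of_lt_of_le (by positivity) (hN k)
  have ht : Tendsto (fun k => empTASEP (N k) (S k)) atTop (𝓝 ρ) := by
    apply FiniteMeasure.tendsto_of_forall_integral_tendsto
    intro f
    set φ : C(Circle', ℝ) := f.toContinuousMap with hφ
    have hM : ∀ u, |φ u| ≤ ‖f‖ := fun u => f.norm_coe_le_norm u
    rw [Metric.tendsto_atTop]
    intro ε hε
    obtain ⟨δ, hδ, hosc⟩ := cell_osc φ (show 0 < ε / 4 by linarith)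
    have l1 : Tendsto (fun k : ℕ => 2 * (1 / ((k:ℝ) + 1))) atTop (𝓝 0) := by
      simpa using (tendsto_one_div_add_atTop_nhds_zero_nat (𝕜 := ℝ)).const_mul 2
    have l2 : Tendsto (fun k : ℕ => ‖f‖ * (1 / ((k:ℝ) + 1))) atTop (𝓝 0) := by
      simpa using (tendsto_one_div_add_atTop_nhds_zero_nat (𝕜 := ℝ)).const_mul ‖f‖
    have ev := (l1.eventually (gt_mem_nhds hδ)).and
      (l2.eventually (gt_mem_nhds (show 0 < ε / 4 by linarith)))
    obtain ⟨K, hK⟩ := eventually_atTop.1 ev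
    refine ⟨K, fun k hk => ?_⟩
    obtain ⟨c1, c2⟩ := hK k hk
    have hNr : (0:ℝ) < N k := by exact_mod_cast hNpos k
    have hN2 : ((k:ℝ)+1)^2 ≤ N k := by exact_mod_cast hN k
    have hk1 : (0:ℝ) < (k:ℝ) + 1 := by positivity
    have hNk : 1 / (N k : ℝ) ≤ 1 / ((k:ℝ)+1) := by
      apply one_div_le_one_div_of_le hk1
      nlinarith
    have := approx_integral (empTASEP (N k) (S k) : Measure Circle') ρ (cell (N k) (k+1))
      (fun j => measurableSet_arc _ _) (cell_disjoint _ _) (cell_cover (hNpos k) (Nat.succ_pos k))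
      φ ‖f‖ (ε/4) hM (by linarith)
      (hosc (N k) (k+1) (hNpos k) (Nat.succ_pos k) (by push_cast; linarith))
      (emp_real_le_one (hNpos k) _) hρ1
    have hsum : ∑ j : Fin (k+1), |(empTASEP (N k) (S k) : Measure Circle').real (cell (N k) (k+1) j)
        - (ρ : Measure Circle').real (cell (N k) (k+1) j)| ≤ 1 / ((k:ℝ)+1) := by
      calc _ ≤ ∑ j : Fin (k+1), 1 / (N k : ℝ) := by
            apply Finset.sum_le_sum
            intro j _
            have := hz k
            rw [emp_real_cell, hS k j]
            exact ncnt_close _ (hNpos k) j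
        _ = ((k:ℝ)+1) / N k := by
            simp [div_eq_mul_inv]
        _ ≤ _ := by
            rw [div_le_div_iff₀ hNr hk1]
            nlinarith
    have h3 := mul_le_mul_of_nonneg_left hsum (norm_nonneg f)
    rw [Real.dist_eq]
    have e : ∀ u, φ u = f u := fun u => rfl
    simp only [e] at this
    linarith
  have := ht.eventually (hO.mem_nhds hρ)
  obtain ⟨k, hk⟩ := this.exists
  exact hSO k hk


lemma jensen_cells {m : ℝ} (hm0 : 0 < m) (hm1 : m < 1) (ρ : Measure Circle') [IsFiniteMeasure ρ]
    (hle : ρ ≤ volume) (hρ : ρ.real univ = m) {k : ℕ} (hk : 0 < k) :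
    -(∫ u, hFun m ((ρ.rnDeriv volume u).toReal)) ≤
      ∑ j : Fin k, (1 / (k:ℝ)) * Real.binEntropy (ρ.real (cell k k j) / (1 / (k:ℝ)))
        - Real.binEntropy m := by
  have hk' : (0:ℝ) < k := by exact_mod_cast hk
  have hac := Measure.absolutelyContinuous_of_le hle
  set f : Circle' → ℝ := fun u => (ρ.rnDeriv volume u).toReal with hf
  have hfm : Measurable f := (Measure.measurable_rnDeriv _ _).ennreal_toReal
  have hf01 : ∀ᵐ u ∂(volume : Measure Circle'), f u ∈ Icc (0:ℝ) 1 := by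
    filter_upwards [Measure.rnDeriv_le_one_of_le hle] with u hu
    exact ⟨ENNReal.toReal_nonneg, ENNReal.toReal_le_of_le_ofReal zero_le_one (by simpa using hu)⟩
  have hfi : Integrable f volume := Measure.integrable_toReal_rnDeriv
  have hgi : Integrable (fun u => Real.binEntropy (f u)) (volume : Measure Circle') := by
    refine Integrable.of_bound (Real.binEntropy_continuous.measurable.comp hfm).aestronglyMeasurable
      (Real.log 2) ?_
    filter_upwards [hf01] with u hu
    rw [Real.norm_eq_abs, abs_of_nonneg (Real.binEntropy_nonneg hu.1 hu.2)]
    exact Real.binEntropy_le_log_two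
  have hint : ∫ u, f u = m := by
    rw [hf, Measure.integral_toReal_rnDeriv hac, hρ]
  have hh : ∫ u, hFun m (f u) = -(∫ u, Real.binEntropy (f u)) + Real.binEntropy m := by
    simp only [hFun_eq hm0 hm1]
    rw [integral_sub, integral_sub, integral_neg, integral_mul_const, integral_mul_const,
      integral_sub (integrable_const _) hfi, hint]
    · rw [Real.binEntropy, Real.log_inv, Real.log_inv]
      have hv1 : (volume : Measure Circle').real univ = 1 := by simp [Measure.real]
      simp [hv1]
      ring
    · exact hgi.neg
    · exact hfi.mul_const _
    · exact hgi.neg.sub (hfi.mul_const _)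
    · exact ((integrable_const _).sub hfi).mul_const _
  have hsplit : ∫ u, Real.binEntropy (f u) = ∑ j : Fin k, ∫ u in cell k k j, Real.binEntropy (f u) := by
    rw [← integral_iUnion_fintype (s := cell k k) (fun j => measurableSet_arc _ _) (cell_disjoint k k)
      (fun j => hgi.integrableOn), cell_cover hk hk, setIntegral_univ]
  have hvol : ∀ j : Fin k, (volume : Measure Circle') (cell k k j) = ENNReal.ofReal (1 / k) := by
    intro j
    have hp : ∀ i, pt k k i = i := fun i => Nat.mul_div_cancel_left i hk
    rw [cell, volume_arc (by positivity) (by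
      rw [div_le_one hk']; exact_mod_cast pt_le k j.2 hk), hp, hp]
    congr 1
    push_cast
    ring
  have hj : ∀ j : Fin k, ∫ u in cell k k j, Real.binEntropy (f u) ≤
      (1 / (k:ℝ)) * Real.binEntropy (ρ.real (cell k k j) / (1 / (k:ℝ))) := by
    intro j
    have hvr : (volume : Measure Circle').real (cell k k j) = 1 / k := by
      rw [Measure.real, hvol, ENNReal.toReal_ofReal (by positivity)]
    have := Real.strictConcave_binEntropy.concaveOn.le_map_set_average
      (μ := (volume : Measure Circle')) (t := cell k k j) (f := f)
      Real.binEntropy_continuous.continuousOn isClosed_Icc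
      (by rw [hvol]; simpa using hk.ne') (by rw [hvol]; exact ENNReal.ofReal_ne_top)
      (ae_restrict_of_ae hf01) hfi.integrableOn hgi.integrableOn
    rw [setAverage_eq, setAverage_eq, hvr, Measure.setIntegral_toReal_rnDeriv hac,
      smul_eq_mul, smul_eq_mul] at this
    have h2 := mul_le_mul_of_nonneg_left this (show 0 ≤ 1 / (k:ℝ) by positivity)
    rw [← mul_assoc, mul_inv_cancel₀ (by positivity), one_mul] at h2
    rw [div_eq_inv_mul (ρ.real _)]
    exact h2
  have := Finset.sum_le_sum fun j (_ : j ∈ Finset.univ) => hj j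
  rw [← hsplit] at this
  linarith

lemma lower_aux {m : ℝ} (hm0 : 0 < m) (hm1 : m < 1) (ρ : FiniteMeasure Circle')
    (hle : (ρ : Measure Circle') ≤ volume) (hρ : (ρ : Measure Circle').real univ = m)
    (O : Set (FiniteMeasure Circle')) (hO : IsOpen O) (hρO : ρ ∈ O) :
    ((-(∫ u, hFun m (((ρ : Measure Circle').rnDeriv volume u).toReal)) : ℝ) : EReal) ≤
      Filter.liminf
        (fun N : ℕ => (((N : ℝ)⁻¹ : ℝ) : EReal) * ENNReal.log (probTASEP m N O)) atTop := by
  obtain ⟨k, hk, hmem⟩ := membership ρ hle O hO hρO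
  have hk' : (0:ℝ) < k := by exact_mod_cast hk
  refine (EReal.coe_le_coe_iff.2 (jensen_cells hm0 hm1 (ρ : Measure Circle') hle hρ hk)).trans ?_
  have hp : ∀ i, pt k k i = i := fun i => Nat.mul_div_cancel_left i hk
  have hcell : ∀ j : Fin k, (ρ : Measure Circle').real (cell k k j) =
      cdfR ρ (((j + 1 : ℕ) : ℝ) / k) - cdfR ρ ((j:ℝ) / k) := by
    intro j
    rw [cdfR_sub _ (by positivity) (by gcongr; simp), cell, hp, hp]
  have hlim1 : ∀ j : Fin k, Tendsto (fun N : ℕ =>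
      Real.log ((pt N k (j+1) - pt N k j).choose (ncnt ρ N k j) : ℝ) / N) atTop
      (𝓝 ((1 / (k:ℝ)) * Real.binEntropy ((ρ : Measure Circle').real (cell k k j) / (1 / (k:ℝ))))) := by
    intro j
    apply choose_asymp (by positivity)
    · intro N
      exact (Nat.sub_le _ _).trans (pt_le N j.2 hk)
    · intro N
      exact ncnt_le _ hle N j.2
    · have := (pt_div_tendsto hk (j+1)).sub (pt_div_tendsto hk j)
      convert this using 2 with N
      · rw [Nat.cast_sub (pt_mono N k (Nat.le_succ _)), sub_div]
      · push_cast; ring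
    · rw [hcell]
      have := (bcnt_div_tendsto (ρ : Measure Circle') hle hk (j := j+1) j.2).sub
        (bcnt_div_tendsto (ρ : Measure Circle') hle hk (j := j) j.2.le)
      refine this.congr fun N => ?_
      rw [ncnt, Nat.cast_sub (bcnt_mono _ N k (Nat.le_succ _)), sub_div]
    · exact measureReal_nonneg
    · rw [cell, hp, hp]
      refine (real_arc_le _ hle (by positivity) (by gcongr; simp) ?_).trans (le_of_eq ?_)
      · rw [div_le_one hk']; exact_mod_cast j.2
      · push_cast; ring
  have hlim := (tendsto_finsetSum Finset.univ fun j _ => hlim1 j).sub (choose_floor_asymp hm0 hm1)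
  have hlim' := (continuous_coe_real_ereal.tendsto _).comp hlim
  rw [← hlim'.liminf_eq]
  refine liminf_le_liminf ?_
  filter_upwards [hmem, eventually_gt_atTop 0] with N hN hN0
  have hNr : (0:ℝ) < N := by exact_mod_cast hN0
  have : NeZero N := ⟨hN0.ne'⟩
  have hcount := count_lower (N := N) (k := k) (fun j => ncnt ρ N k j)
    {S : Finset (ZMod N) | S.card = ⌊(N : ℝ) * m⌋₊ ∧ empTASEP N S ∈ O} (by
      intro S h1 h2
      refine ⟨?_, hN S h2⟩
      rw [h1, sum_ncnt _ hρ hN0 hk])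
  have hcp : (0:ℝ) < N.choose ⌊(N : ℝ) * m⌋₊ := by
    exact_mod_cast Nat.choose_pos (floor_le_N hm0 hm1 N)
  have hpp : ∀ j : Fin k, (0:ℝ) < ((pt N k (j+1) - pt N k j).choose (ncnt ρ N k j) : ℝ) := by
    intro j
    exact_mod_cast Nat.choose_pos (ncnt_le _ hle N j.2)
  have hprod : (0:ℝ) < ∏ j : Fin k, ((pt N k (j+1) - pt N k j).choose (ncnt ρ N k j) : ℝ) :=
    Finset.prod_pos fun j _ => hpp j
  have hle2 : ENNReal.ofReal ((∏ j : Fin k, ((pt N k (j+1) - pt N k j).choose (ncnt ρ N k j) : ℝ))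
      / N.choose ⌊(N : ℝ) * m⌋₊) ≤ probTASEP m N O := by
    rw [prob_eq hm0 hm1]
    apply ENNReal.ofReal_le_ofReal
    apply div_le_div_of_nonneg_right _ hcp.le
    exact_mod_cast hcount
  have hlog := ENNReal.log_monotone hle2
  rw [ENNReal.log_ofReal_of_pos (div_pos hprod hcp), Real.log_div hprod.ne' hcp.ne',
    Real.log_prod (fun j _ => (hpp j).ne')] at hlog
  refine le_trans (le_of_eq ?_)
    (mul_le_mul_of_nonneg_left hlog (by exact_mod_cast (inv_pos.2 hNr).le))
  rw [← EReal.coe_mul]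
  simp only [Function.comp]
  congr 1
  rw [mul_sub, Finset.mul_sum]
  simp only [div_eq_inv_mul]

lemma lower_bound {m : ℝ} (hm0 : 0 < m) (hm1 : m < 1) (O : Set (FiniteMeasure Circle'))
    (hO : IsOpen O) :
    - ⨅ ρ ∈ O, (rateTASEP m ρ : EReal) ≤ Filter.liminf
        (fun N : ℕ => (((N : ℝ)⁻¹ : ℝ) : EReal) * ENNReal.log (probTASEP m N O)) atTop := by
  rw [EReal.neg_le]
  refine le_iInf₂ fun ρ hρO => ?_
  rw [EReal.neg_le]
  by_cases h : (ρ : Measure Circle') ≪ (volume : Measure Circle')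
      ∧ (∀ᵐ u ∂(volume : Measure Circle'),
          (((ρ : Measure Circle').rnDeriv volume u)).toReal ≤ 1)
      ∧ (ρ : Measure Circle') Set.univ = ENNReal.ofReal m
  swap
  · rw [rateTASEP, if_neg h]
    simp
  have hle : (ρ : Measure Circle') ≤ volume := by
    rw [← Measure.rnDeriv_le_one_iff_le h.1]
    filter_upwards [h.2.1, Measure.rnDeriv_lt_top (ρ : Measure Circle') volume] with u hu hu'
    have := (ENNReal.le_ofReal_iff_toReal_le hu'.ne zero_le_one).2 hu
    simpa using this
  have hρ : (ρ : Measure Circle').real univ = m := by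
    rw [Measure.real, h.2.2, ENNReal.toReal_ofReal hm0.le]
  refine le_trans ?_ (lower_aux hm0 hm1 ρ hle hρ O hO hρO)
  rw [rateTASEP, if_pos h, EReal.coe_ennreal_ofReal, ← EReal.coe_neg, EReal.coe_le_coe_iff]
  exact neg_le_neg (le_max_left _ _)

/-- LDP for the empirical measures of the invariant measures (uniform
measures) of the one-class TASEP with `⌊Nm⌋` particles, with speed `N` and rate
functional `S₁(ρ) = ∫ h_m(dρ/dLeb)` (and `+∞` off the absolutely continuous measures
of mass `m` with density in `[0,1]`). -/
theorem stmt11 (m : ℝ) (hm0 : 0 < m) (hm1 : m < 1) :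
    (∀ C : Set (FiniteMeasure Circle'), IsClosed C →
      Filter.limsup
        (fun N : ℕ => (((N : ℝ)⁻¹ : ℝ) : EReal) * ENNReal.log (probTASEP m N C))
        Filter.atTop
        ≤ - ⨅ ρ ∈ C, (rateTASEP m ρ : EReal)) ∧
    (∀ O : Set (FiniteMeasure Circle'), IsOpen O →
      - ⨅ ρ ∈ O, (rateTASEP m ρ : EReal)
        ≤ Filter.liminf
            (fun N : ℕ => (((N : ℝ)⁻¹ : ℝ) : EReal) * ENNReal.log (probTASEP m N O))
            Filter.atTop) := by
  exact ⟨fun C hC => upper_bound hm0 hm1 C hC, fun O hO => lower_bound hm0 hm1 O hO⟩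

end
end

section
/- Let m ∈ (0,1), L > 0, and let g : [0,L] → [0,1] be measurable. Set F(u) := ∫_0^u g(w) dw and let F̂ be the least concave majorant of F on [0,L]; let ĝ : [0,L] → [0,1] be a measurable function with ∫_0^u ĝ(w) dw = F̂(u) for all u ∈ [0,L]. Then ĝ is a minimizer of the variational problem: for every measurable φ : [0,L] → [0,1] satisfying ∫_0^u φ(w) dw ≥ F(u) for all u ∈ [0,L] and ∫_0^L φ(w) dw = F(L), one has ∫_0^L h_m(φ(u)) du ≥ ∫_0^L h_m(ĝ(u)) du; moreover ĝ itself satisfies these constraints, so the infimum of ∫_0^L h_m(φ) over the constraint set equals ∫_0^L h_m(ĝ). -/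
open MeasureTheory Set

noncomputable section

/-- The least concave majorant of `F` on `[0,L]`: the pointwise infimum of all concave
functions on `[0,L]` dominating `F` there. -/
noncomputable def lcMaj (L : ℝ) (F : ℝ → ℝ) (u : ℝ) : ℝ :=
  sInf {y : ℝ | ∃ G : ℝ → ℝ,
    ConcaveOn ℝ (Set.Icc 0 L) G ∧ (∀ x ∈ Set.Icc 0 L, F x ≤ G x) ∧ y = G u}

theorem aux_ii {f : ℝ → ℝ} (hf : Measurable f) (C : ℝ) (hC : ∀ x, |f x| ≤ C) (a b : ℝ) :
    IntervalIntegrable f volume a b := by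
  refine (intervalIntegrable_const (c := C)).mono_fun hf.aestronglyMeasurable ?_
  refine Filter.Eventually.of_forall fun x => ?_
  simpa using (hC x).trans (le_abs_self C)

theorem aux_ii01 {f : ℝ → ℝ} (hf : Measurable f) (hr : ∀ x, f x ∈ Set.Icc (0:ℝ) 1) (a b : ℝ) :
    IntervalIntegrable f volume a b :=
  aux_ii hf 1 (fun x => abs_le.2 ⟨by linarith [(hr x).1], (hr x).2⟩) a b

/-- Green kernel -/
noncomputable def kG (x c : ℝ) : ℝ := min (x / c) ((1 - x) / (1 - c))

theorem kG_eq {x c : ℝ} (hc : c ∈ Set.Ioo (0:ℝ) 1) :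
    kG x c = x / c - max (x - c) 0 / (c * (1 - c)) := by
  obtain ⟨h0, h1⟩ := hc
  have h2 : 0 < 1 - c := by linarith
  unfold kG
  rcases le_total x c with h | h
  · rw [max_eq_right (by linarith), min_eq_left]
    · simp
    · rw [div_le_div_iff₀ h0 h2]; nlinarith
  · rw [max_eq_left (by linarith), min_eq_right]
    · field_simp; ring
    · rw [div_le_div_iff₀ h2 h0]; nlinarith

theorem kG_mem {x c : ℝ} (hx : x ∈ Set.Icc (0:ℝ) 1) (hc : c ∈ Set.Icc (0:ℝ) 1) :
    kG x c ∈ Set.Icc (0:ℝ) 1 := by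
  obtain ⟨h0, h1⟩ := hc
  obtain ⟨hx0, hx1⟩ := hx
  unfold kG
  refine ⟨le_min (div_nonneg hx0 h0) (div_nonneg (by linarith) (by linarith)), ?_⟩
  rcases le_total x c with h | h
  · exact (min_le_left _ _).trans (div_le_one_of_le₀ h h0)
  · exact (min_le_right _ _).trans (div_le_one_of_le₀ (by linarith) (by linarith))

theorem aux_pos {x : ℝ} (hx : x ∈ Set.Icc (0:ℝ) 1) :
    (∫ c in x..1, x / c) = -(x * Real.log x) := by
  rcases hx.1.eq_or_lt with h | h
  · subst h; simp
  · simp only [div_eq_mul_inv]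
    rw [intervalIntegral.integral_const_mul, integral_inv_of_pos h one_pos]
    simp [Real.log_inv]

theorem kG_int {x : ℝ} (hx : x ∈ Set.Icc (0:ℝ) 1) :
    (∫ c in (0:ℝ)..1, kG x c) = -(x * Real.log x) - (1 - x) * Real.log (1 - x) := by
  have hm : Measurable (kG x) := by unfold kG; fun_prop
  have hi : ∀ a b, a ∈ Set.Icc (0:ℝ) 1 → b ∈ Set.Icc (0:ℝ) 1 →
      IntervalIntegrable (kG x) volume a b := by
    intro a b ha hb
    refine (intervalIntegrable_const (c := (1:ℝ))).mono_fun hm.aestronglyMeasurable ?_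
    refine (ae_restrict_mem measurableSet_uIoc).mono fun c hc => ?_
    have hc' : c ∈ Set.Icc (0:ℝ) 1 :=
      (Set.uIcc_subset_Icc ha hb) (Set.uIoc_subset_uIcc hc)
    have := kG_mem hx hc'
    simp only [Real.norm_eq_abs, norm_one]
    rw [abs_of_nonneg this.1]; simpa using this.2
  rw [← intervalIntegral.integral_add_adjacent_intervals (b := x)
    (hi 0 x (by simp) hx) (hi x 1 hx (by simp))]
  have e1 : (∫ c in (0:ℝ)..x, kG x c) = ∫ c in (0:ℝ)..x, (fun y => (1 - x) / y) (1 - c) := by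
    rw [intervalIntegral.integral_of_le hx.1, intervalIntegral.integral_of_le hx.1,
      integral_Ioc_eq_integral_Ioo, integral_Ioc_eq_integral_Ioo]
    refine setIntegral_congr_fun measurableSet_Ioo fun c hc => ?_
    have h2 : 0 < 1 - c := by linarith [hc.2, hx.2]
    refine min_eq_right ?_
    rw [div_le_div_iff₀ h2 hc.1]; nlinarith [hc.2]
  have e2 : (∫ c in x..1, kG x c) = ∫ c in x..1, x / c := by
    rw [intervalIntegral.integral_of_le hx.2, intervalIntegral.integral_of_le hx.2,
      integral_Ioc_eq_integral_Ioo, integral_Ioc_eq_integral_Ioo]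
    refine setIntegral_congr_fun measurableSet_Ioo fun c hc => ?_
    have h2 : 0 < 1 - c := by linarith [hc.2, hx.2]
    refine min_eq_left ?_
    rw [div_le_div_iff₀ (by linarith [hc.1, hx.1]) h2]; nlinarith [hc.1]
  have e3 := aux_pos (x := 1 - x) ⟨by linarith [hx.2], by linarith [hx.1]⟩
  rw [e1, e2, aux_pos hx, intervalIntegral.integral_comp_sub_left, sub_zero, e3]
  ring

theorem hFun_eq_s14 {m x : ℝ} (hm : m ∈ Set.Ioo (0:ℝ) 1) (hx : x ∈ Set.Icc (0:ℝ) 1) :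
    hFun m x = (x * (Real.log (1 - m) - Real.log m) - Real.log (1 - m))
      - ∫ c in (0:ℝ)..1, kG x c := by
  have hm0 : m ≠ 0 := hm.1.ne'
  have hm1 : 1 - m ≠ 0 := by linarith [hm.2]
  have h1 : x * Real.log (x / m) = x * Real.log x - x * Real.log m := by
    by_cases h : x = 0
    · simp [h]
    · rw [Real.log_div h hm0]; ring
  have h2 : (1 - x) * Real.log ((1 - x) / (1 - m))
      = (1 - x) * Real.log (1 - x) - (1 - x) * Real.log (1 - m) := by
    by_cases h : 1 - x = 0
    · simp [h]
    · rw [Real.log_div h hm1]; ring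
  rw [kG_int hx, hFun, h1, h2]; ring

/-- Comparison of convex integrals from comparison of hockey-stick integrals. -/
theorem aux_fubini {m L : ℝ} (hm : m ∈ Set.Ioo (0:ℝ) 1) (hL : 0 < L) {f : ℝ → ℝ}
    (hf : Measurable f) (hr : ∀ u, f u ∈ Set.Icc (0:ℝ) 1) :
    (∫ u in (0:ℝ)..L, hFun m (f u)) =
      ((∫ u in (0:ℝ)..L, f u) * (Real.log (1 - m) - Real.log m) - L * Real.log (1 - m))
        - ∫ c in (0:ℝ)..1, ∫ u in (0:ℝ)..L, kG (f u) c ∧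
    IntervalIntegrable (fun c => ∫ u in (0:ℝ)..L, kG (f u) c) volume 0 1 := by
  have hmeas : Measurable (Function.uncurry fun u c => kG (f u) c) := by
    unfold kG Function.uncurry; fun_prop
  have hint : Integrable (Function.uncurry fun u c => kG (f u) c)
      ((volume.restrict (Set.Ioc 0 L)).prod (volume.restrict (Set.Ioc (0:ℝ) 1))) := by
    refine (integrable_const (1:ℝ)).mono' hmeas.aestronglyMeasurable ?_
    rw [Measure.prod_restrict]
    refine (ae_restrict_mem (measurableSet_Ioc.prod measurableSet_Ioc)).mono fun p hp => ?_
    have := kG_mem (hr p.1) ⟨hp.2.1.le, hp.2.2⟩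
    rw [Real.norm_eq_abs, Function.uncurry, abs_of_nonneg this.1]
    exact this.2
  have hsw := integral_integral_swap hint
  have hi1 := hint.integral_prod_left
  have hi2 := hint.integral_prod_right
  simp only [Function.uncurry] at hi1 hi2
  constructor
  · simp only [intervalIntegral.integral_of_le hL.le, intervalIntegral.integral_of_le zero_le_one]
    rw [← hsw]
    have hfi : Integrable f (volume.restrict (Set.Ioc 0 L)) := (aux_ii01 hf hr 0 L).1
    have : (fun u => hFun m (f u)) = fun u =>
      (f u * (Real.log (1 - m) - Real.log m) - Real.log (1 - m))
      - ∫ c in Set.Ioc (0:ℝ) 1, kG (f u) c := by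
      funext u
      rw [hFun_eq_s14 hm (hr u), intervalIntegral.integral_of_le zero_le_one]
    rw [this, integral_sub _ hi1, integral_sub, integral_mul_const]
    · simp [hL.le]
    · exact hfi.mul_const _
    · exact integrable_const _
    · exact (hfi.mul_const _).sub (integrable_const _)
  · rw [intervalIntegrable_iff_integrableOn_Ioc_of_le zero_le_one]
    simp only [intervalIntegral.integral_of_le hL.le]
    exact hi2

theorem aux_k {L c : ℝ} (hc : c ∈ Set.Ioo (0:ℝ) 1) {f : ℝ → ℝ}
    (hf : Measurable f) (hr : ∀ u, f u ∈ Set.Icc (0:ℝ) 1) :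
    (∫ u in (0:ℝ)..L, kG (f u) c) = (∫ u in (0:ℝ)..L, f u) / c -
      (∫ u in (0:ℝ)..L, max (f u - c) 0) / (c * (1 - c)) := by
  simp only [kG_eq hc]
  have hi := aux_ii01 hf hr 0 L
  have hi2 : IntervalIntegrable (fun u => max (f u - c) 0) volume 0 L := by
    refine aux_ii (by fun_prop) 1 (fun x => ?_) 0 L
    rw [abs_of_nonneg (le_max_right _ _)]
    exact max_le (by linarith [(hr x).2, hc.1]) zero_le_one
  rw [intervalIntegral.integral_sub (hi.div_const _) (hi2.div_const _),
    intervalIntegral.integral_div, intervalIntegral.integral_div]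

theorem lcMaj_le {L : ℝ} {F G : ℝ → ℝ} (hG : ConcaveOn ℝ (Set.Icc 0 L) G)
    (h : ∀ x ∈ Set.Icc 0 L, F x ≤ G x) {u : ℝ} (hu : u ∈ Set.Icc 0 L) :
    lcMaj L F u ≤ G u := by
  refine csInf_le ⟨F u, ?_⟩ ⟨G, hG, h, rfl⟩
  rintro y ⟨G', -, h', rfl⟩
  exact h' u hu

theorem le_lcMaj {L C : ℝ} {F : ℝ → ℝ} (hC : ∀ x ∈ Set.Icc 0 L, F x ≤ C) {u y : ℝ}
    (h : ∀ G : ℝ → ℝ, ConcaveOn ℝ (Set.Icc 0 L) G → (∀ x ∈ Set.Icc 0 L, F x ≤ G x) → y ≤ G u) :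
    y ≤ lcMaj L F u := by
  refine le_csInf ⟨C, fun _ => C, concaveOn_const _ (convex_Icc _ _), hC, rfl⟩ ?_
  rintro y ⟨G', h1, h', rfl⟩
  exact h G' h1 h'

theorem lcMaj_concave {L C : ℝ} {F : ℝ → ℝ} (hC : ∀ x ∈ Set.Icc 0 L, F x ≤ C) :
    ConcaveOn ℝ (Set.Icc 0 L) (lcMaj L F) := by
  refine ⟨convex_Icc _ _, ?_⟩
  intro x hx y hy a b ha hb hab
  refine le_lcMaj hC fun G hG h => ?_
  refine le_trans ?_ (hG.2 hx hy ha hb hab)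
  simp only [smul_eq_mul]
  gcongr
  · exact lcMaj_le hG h hx
  · exact lcMaj_le hG h hy

/-- If the primitive of `f` is concave then the hockey-stick integral is attained. -/
theorem aux_hockey {L c : ℝ} (hL : 0 < L) {f : ℝ → ℝ}
    (hf : Measurable f) (hr : ∀ u, f u ∈ Set.Icc (0:ℝ) 1)
    (hconc : ConcaveOn ℝ (Set.Icc 0 L) (fun u => ∫ w in (0:ℝ)..u, f w)) :
    ∃ u ∈ Set.Icc 0 L, (∫ w in (0:ℝ)..L, max (f w - c) 0) = (∫ w in (0:ℝ)..u, f w) - c * u := by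
  have hi := aux_ii01 hf hr
  have hic : ∀ a b, IntervalIntegrable (fun u => f u - c) volume a b :=
    fun a b => (hi a b).sub intervalIntegrable_const
  set H : ℝ → ℝ := fun u => ∫ w in (0:ℝ)..u, (f w - c) with hH
  have hHe : ∀ u, H u = (∫ w in (0:ℝ)..u, f w) - c * u := by
    intro u
    rw [hH]
    simp only
    rw [intervalIntegral.integral_sub (hi 0 u) intervalIntegrable_const]
    simp [mul_comm]
  have hHc : ConcaveOn ℝ (Set.Icc 0 L) H := by
    refine ⟨convex_Icc _ _, ?_⟩
    intro x hx y hy a b ha hb hab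
    have := hconc.2 hx hy ha hb hab
    simp only [smul_eq_mul, hHe] at this ⊢
    linarith
  have hcont : Continuous H := intervalIntegral.continuous_primitive hic 0
  obtain ⟨s, hs, hmax⟩ := isCompact_Icc.exists_isMaxOn (Set.nonempty_Icc.2 hL.le)
    hcont.continuousOn
  have hmono : MonotoneOn H (Set.Icc 0 s) := by
    intro a ha b hb hab
    have := hHc.min_le_of_mem_Icc (x := a) (y := s) (z := b) ⟨ha.1, ha.2.trans hs.2⟩ hs ⟨hab, hb.2⟩
    rwa [min_eq_left (hmax ⟨ha.1, ha.2.trans hs.2⟩)] at this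
  have hanti : AntitoneOn H (Set.Icc s L) := by
    intro a ha b hb hab
    have := hHc.min_le_of_mem_Icc (x := s) (y := b) (z := a) hs ⟨hs.1.trans hb.1, hb.2⟩ ⟨ha.1, hab⟩
    rwa [min_eq_right (hmax ⟨hs.1.trans hb.1, hb.2⟩)] at this
  have hae : ∀ᵐ x, x ∈ uIcc 0 L → ∀ d ∈ uIcc 0 L,
      HasDerivAt (fun x => ∫ t in d..x, (f t - c)) (f x - c) x :=
    (hic 0 L).ae_hasDerivAt_integral
  have hne : ∀ᵐ x : ℝ, x ≠ s := by simp [ae_iff, measure_singleton]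
  have hi2 : ∀ a b, IntervalIntegrable (fun u => max (f u - c) 0) volume a b := by
    intro a b
    refine aux_ii (by fun_prop) (1 + |c|) (fun x => ?_) a b
    rw [abs_of_nonneg (le_max_right _ _)]
    exact max_le (by linarith [(hr x).2, neg_abs_le c]) (by positivity)
  refine ⟨s, hs, ?_⟩
  rw [← hHe, ← intervalIntegral.integral_add_adjacent_intervals (hi2 0 s) (hi2 s L)]
  have e1 : (∫ w in (0:ℝ)..s, max (f w - c) 0) = H s := by
    refine intervalIntegral.integral_congr_ae ?_
    filter_upwards [hae, hne] with x hx hxs hxm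
    rw [uIoc_of_le hs.1] at hxm
    have hd := hx (by rw [uIcc_of_le hL.le]; exact ⟨hxm.1.le, hxm.2.trans hs.2⟩) 0 (by simp)
    have hpos : (0:ℝ) < s := hxm.1.trans_le hxm.2
    have h2 := hmono.derivWithin_nonneg (x := x)
    rw [(hd.hasDerivWithinAt (s := Set.Icc 0 s)).derivWithin
      (uniqueDiffOn_Icc hpos x ⟨hxm.1.le, hxm.2⟩)] at h2
    exact max_eq_left h2
  have e2 : (∫ w in s..L, max (f w - c) 0) = ∫ w in s..L, (0:ℝ) := by
    refine intervalIntegral.integral_congr_ae ?_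
    filter_upwards [hae, hne] with x hx hxs hxm
    rw [uIoc_of_le hs.2] at hxm
    have hd := hx (by rw [uIcc_of_le hL.le]; exact ⟨hs.1.trans hxm.1.le, hxm.2⟩) 0 (by simp)
    have hpos : s < L := hxm.1.trans_le hxm.2
    have h2 := hanti.derivWithin_nonpos (x := x)
    rw [(hd.hasDerivWithinAt (s := Set.Icc s L)).derivWithin
      (uniqueDiffOn_Icc hpos x ⟨hxm.1.le, hxm.2⟩)] at h2
    exact max_eq_right h2
  rw [e1, e2]; simp

/-- the density `ĝ` of the least concave majorant `F̂` of `F(u) = ∫_0^u g`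
minimizes `∫_0^L h_m(φ)` among measurable `φ : [0,L] → [0,1]` with `∫_0^u φ ≥ F(u)` for
all `u ∈ [0,L]` and `∫_0^L φ = F(L)`; moreover `ĝ` itself satisfies these constraints,
so the infimum over the constraint set equals `∫_0^L h_m(ĝ)`. -/
theorem stmt14 (m L : ℝ) (hm : m ∈ Set.Ioo (0:ℝ) 1) (hL : 0 < L)
    (g : ℝ → ℝ) (hgmeas : Measurable g) (hgrange : ∀ u, g u ∈ Set.Icc (0:ℝ) 1)
    (ghat : ℝ → ℝ) (hghatmeas : Measurable ghat) (hghatrange : ∀ u, ghat u ∈ Set.Icc (0:ℝ) 1)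
    (hghat : ∀ u ∈ Set.Icc 0 L,
      (∫ w in (0:ℝ)..u, ghat w) = lcMaj L (fun t => ∫ w in (0:ℝ)..t, g w) u) :
    ((∀ u ∈ Set.Icc 0 L, (∫ w in (0:ℝ)..u, g w) ≤ ∫ w in (0:ℝ)..u, ghat w) ∧
      (∫ w in (0:ℝ)..L, ghat w) = ∫ w in (0:ℝ)..L, g w) ∧
    (∀ φ : ℝ → ℝ, Measurable φ → (∀ u, φ u ∈ Set.Icc (0:ℝ) 1) →
      (∀ u ∈ Set.Icc 0 L, (∫ w in (0:ℝ)..u, g w) ≤ ∫ w in (0:ℝ)..u, φ w) →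
      (∫ w in (0:ℝ)..L, φ w) = ∫ w in (0:ℝ)..L, g w →
      (∫ u in (0:ℝ)..L, hFun m (ghat u)) ≤ ∫ u in (0:ℝ)..L, hFun m (φ u)) := by
  have hgi := aux_ii01 hgmeas hgrange
  have hC : ∀ x ∈ Set.Icc 0 L, (fun t => ∫ w in (0:ℝ)..t, g w) x ≤ ∫ w in (0:ℝ)..L, g w := by
    intro x hx
    refine intervalIntegral.integral_mono_interval le_rfl hx.1 hx.2 ?_ (hgi 0 L)
    exact Filter.Eventually.of_forall fun u => (hgrange u).1
  have h1 : ∀ u ∈ Set.Icc 0 L, (∫ w in (0:ℝ)..u, g w) ≤ ∫ w in (0:ℝ)..u, ghat w := by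
    intro u hu
    rw [hghat u hu]
    exact le_lcMaj hC fun G _ h => h u hu
  have hLm : L ∈ Set.Icc 0 L := ⟨hL.le, le_rfl⟩
  have h2 : (∫ w in (0:ℝ)..L, ghat w) = ∫ w in (0:ℝ)..L, g w := by
    refine le_antisymm ?_ (h1 L hLm)
    rw [hghat L hLm]
    exact lcMaj_le (concaveOn_const _ (convex_Icc _ _)) hC hLm
  refine ⟨⟨h1, h2⟩, ?_⟩
  intro φ hφ hφr hφF hφL
  have hconc : ConcaveOn ℝ (Set.Icc 0 L) (fun u => ∫ w in (0:ℝ)..u, ghat w) :=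
    (lcMaj_concave hC).congr fun u hu => (hghat u hu).symm
  obtain ⟨e1, i1⟩ := aux_fubini hm hL hghatmeas hghatrange
  obtain ⟨e2, i2⟩ := aux_fubini hm hL hφ hφr
  rw [e1, e2, h2, hφL]
  refine sub_le_sub_left ?_ _
  refine intervalIntegral.integral_mono_on_of_le_Ioo zero_le_one i2 i1 fun c hc => ?_
  rw [aux_k hc hφ hφr, aux_k hc hghatmeas hghatrange, h2, hφL]
  refine sub_le_sub_left ?_ _
  have hcc : 0 < c * (1 - c) := mul_pos hc.1 (by linarith [hc.2])
  refine div_le_div_of_nonneg_right ?_ hcc.le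
  obtain ⟨s, hs, es⟩ := aux_hockey (c := c) hL hghatmeas hghatrange hconc
  rw [es, hghat s hs]
  set S := ∫ u in (0:ℝ)..L, max (φ u - c) 0 with hS
  have hi2 : ∀ a b, IntervalIntegrable (fun u => max (φ u - c) 0) volume a b := by
    intro a b
    refine aux_ii (by fun_prop) 1 (fun x => ?_) a b
    rw [abs_of_nonneg (le_max_right _ _)]
    exact max_le (by linarith [(hφr x).2, hc.1]) zero_le_one
  have hGc : ConcaveOn ℝ (Set.Icc 0 L) (fun u => c * u + S) := by
    refine ⟨convex_Icc _ _, ?_⟩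
    intro x _ y _ a b _ _ hab
    simp only [smul_eq_mul]
    have : b = 1 - a := by linarith
    subst this
    apply le_of_eq; ring
  have := lcMaj_le (F := fun t => ∫ w in (0:ℝ)..t, g w) hGc (fun x hx => ?_) hs
  · linarith
  · refine (hφF x hx).trans ?_
    have a1 : (∫ u in (0:ℝ)..x, max (φ u - c) 0) ≤ S :=
      intervalIntegral.integral_mono_interval le_rfl hx.1 hx.2
        (Filter.Eventually.of_forall fun u => le_max_right _ _) (hi2 0 L)
    have a2 : (∫ u in (0:ℝ)..x, (φ u - c)) ≤ ∫ u in (0:ℝ)..x, max (φ u - c) 0 :=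
      intervalIntegral.integral_mono_on hx.1
        ((aux_ii01 hφ hφr 0 x).sub intervalIntegrable_const) (hi2 0 x)
        (fun u _ => le_max_left _ _)
    rw [intervalIntegral.integral_sub (aux_ii01 hφ hφr 0 x) intervalIntegrable_const] at a2
    simp only [intervalIntegral.integral_const, sub_zero, smul_eq_mul] at a2
    linarith [mul_comm x c]

end
end
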